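/- arXiv:1401.4698 — 3 statements merged into one kernel-verified Lean document; each statement's English description precedes it below -/
import Mathlib

section
/- Let 1 < p < ∞, let X be a nontrivial real normed vector space, Z = {(x,y) ∈ X × ℝ : |x| ≤ y}, φ((x,y), d) = (x + d, max(y, |x + d|)), and for c ≥ 0 let f_c(x,y) = y^p − c|x|^p. If 0 ≤ c < (p/(p−1))^p, then A^∞f_c(x,y) = +∞ for every (x,y) ∈ Z with y > 0; if c ≥ (p/(p−1))^p, then A^∞f_c is real-valued (finite) on all of Z. -/
/-!
Let `q = p / (p - 1)` and let `T_y(t) = y ^ p + p * y ^ (p - 1) * (t - y)` be the tangent line of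
`t ^ p` at `y`.

*Finiteness.* `U(x, y) = -q * T_y(|x|)` satisfies `AU ≤ U`: along `d ↦ φ((x, y), d)`, raising the
tangency point from `y` to `|x + d|` raises `T` at `|x + d|` by convexity of `t ^ p`, so `U` stays
below the function `-q * T_y(|x + d|)`, which is concave in `d`. Moreover
`U(x, y) = y ^ p - T_y(q|x|) ≥ y ^ p - q ^ p * |x| ^ p ≥ f_c(x, y)` if `c ≥ q ^ p`.

*Blow-up.* From a state `(x, |x|)`, bet to move to `u • x` with probability `a = u ^ (-p)` and to
`d • x` with probability `1 - a`, where `a * u + (1 - a) * d = 1`. Winning leads to a state of the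
same kind, and `a * |u • x| ^ p = |x| ^ p`; losing yields `(1 - c * d ^ p) * |x| ^ p`. Each
application of `A` thus gains `(1 - a) * (1 - c * d ^ p) * |x| ^ p`. Since
`d = (1 - a ^ (1 / q)) / (1 - a)` tends to `1 / q` as `a` tends to `1`, the gain can be made
positive exactly when `c < q ^ p`. One more application of `A` reaches every state with `y > 0`,
because the ball of radius `y` is the convex hull of its sphere.
-/

/-- An `EReal`-valued function on a real vector space is concave
(with the convention `⊤ + ⊥ = ⊥` of `EReal`). -/
def IsEConcave {X : Type*} [AddCommGroup X] [Module ℝ X] (ψ : X → EReal) : Prop :=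
  ∀ x y : X, ∀ a b : ℝ, 0 ≤ a → 0 ≤ b → a + b = 1 →
    (a : EReal) * ψ x + (b : EReal) * ψ y ≤ ψ (a • x + b • y)

/-- The concave envelope `g^♯` of `g : X → EReal`: the pointwise infimum of all
concave functions dominating `g`. -/
noncomputable def concaveEnvelope {X : Type*} [AddCommGroup X] [Module ℝ X]
    (g : X → EReal) (x : X) : EReal :=
  ⨅ ψ : {ψ : X → EReal // IsEConcave ψ ∧ ∀ y, g y ≤ ψ y}, ψ.1 x

/-- The operator `A`: `Ag(z) = (g ∘ φ(z,·))^♯(0)`. -/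
noncomputable def Aop {X Z : Type*} [AddCommGroup X] [Module ℝ X]
    (φ : Z → X → Z) (g : Z → EReal) : Z → EReal :=
  fun z => concaveEnvelope (fun d => g (φ z d)) 0

/-- The update map of Doob's inequality: `φ((x,y),d) = (x+d, max(y,|x+d|))` on the
state space `Z = {(x,y) : |x| ≤ y}`. -/
noncomputable def doobPhi (X : Type*) [NormedAddCommGroup X] [NormedSpace ℝ X] :
    {z : X × ℝ // ‖z.1‖ ≤ z.2} → X → {z : X × ℝ // ‖z.1‖ ≤ z.2} :=
  fun z d => ⟨(z.1.1 + d, max z.1.2 ‖z.1.1 + d‖), le_max_right _ _⟩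

open Filter Metric Set Topology

section ConcaveEnvelope

variable {X : Type*} [AddCommGroup X] [Module ℝ X] {g h ψ : X → EReal}

theorem isEConcave_coe_iff {u : X → ℝ} :
    IsEConcave (fun x ↦ (u x : EReal)) ↔ ConcaveOn ℝ univ u := by
  simp only [IsEConcave, ConcaveOn, convex_univ, mem_univ, true_and, forall_const, smul_eq_mul]
  norm_cast

theorem IsEConcave.convex_ge (hψ : IsEConcave ψ) (m : EReal) : Convex ℝ {x | m ≤ ψ x} := by
  intro x hx y hy a b ha hb hab
  have ha' : (0 : EReal) ≤ a := by exact_mod_cast ha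
  have hb' : (0 : EReal) ≤ b := by exact_mod_cast hb
  calc
    m = a * m + b * m := by
      rw [← EReal.right_distrib_of_nonneg ha' hb', ← EReal.coe_add, hab, EReal.coe_one, one_mul]
    _ ≤ a * ψ x + b * ψ y :=
      add_le_add (mul_le_mul_of_nonneg_left hx ha') (mul_le_mul_of_nonneg_left hy hb')
    _ ≤ ψ (a • x + b • y) := hψ x y a b ha hb hab

theorem concaveEnvelope_le (hψ : IsEConcave ψ) (hgψ : g ≤ ψ) : concaveEnvelope g ≤ ψ :=
  fun x ↦ iInf_le (fun ψ : {ψ : X → EReal // IsEConcave ψ ∧ ∀ y, g y ≤ ψ y} ↦ ψ.1 x) ⟨ψ, hψ, hgψ⟩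

theorem le_concaveEnvelope (g : X → EReal) : g ≤ concaveEnvelope g :=
  fun x ↦ le_iInf fun ψ ↦ ψ.2.2 x

theorem isEConcave_concaveEnvelope (g : X → EReal) : IsEConcave (concaveEnvelope g) := by
  intro x y a b ha hb hab
  refine le_iInf fun ψ ↦ le_trans ?_ (ψ.2.1 x y a b ha hb hab)
  have hψ := concaveEnvelope_le ψ.2.1 ψ.2.2
  exact add_le_add (mul_le_mul_of_nonneg_left (hψ x) (by exact_mod_cast ha))
    (mul_le_mul_of_nonneg_left (hψ y) (by exact_mod_cast hb))

theorem concaveEnvelope_mono (hgh : g ≤ h) : concaveEnvelope g ≤ concaveEnvelope h :=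
  concaveEnvelope_le (isEConcave_concaveEnvelope h) (hgh.trans (le_concaveEnvelope h))

theorem le_concaveEnvelope_of_mem_convexHull {s : Set X} {m : EReal} {x : X}
    (hs : ∀ y ∈ s, m ≤ g y) (hx : x ∈ convexHull ℝ s) : m ≤ concaveEnvelope g x :=
  convexHull_min (fun y hy ↦ (hs y hy).trans (le_concaveEnvelope g y))
    ((isEConcave_concaveEnvelope g).convex_ge m) hx

theorem coe_combo_le_concaveEnvelope {x y : X} {a b r s : ℝ} (ha : 0 ≤ a) (hb : 0 ≤ b)
    (hab : a + b = 1) (hr : (r : EReal) ≤ g x) (hs : (s : EReal) ≤ g y) :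
    ((a * r + b * s : ℝ) : EReal) ≤ concaveEnvelope g (a • x + b • y) := by
  refine le_trans ?_ (isEConcave_concaveEnvelope g x y a b ha hb hab)
  push_cast
  exact add_le_add
    (mul_le_mul_of_nonneg_left (hr.trans (le_concaveEnvelope g x)) (by exact_mod_cast ha))
    (mul_le_mul_of_nonneg_left (hs.trans (le_concaveEnvelope g y)) (by exact_mod_cast hb))

end ConcaveEnvelope

section Aop

variable {X Z : Type*} [AddCommGroup X] [Module ℝ X] {φ : Z → X → Z}

theorem aop_mono : Monotone (Aop φ) :=
  fun _ _ hgh z ↦ concaveEnvelope_mono (fun d ↦ hgh (φ z d)) 0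

theorem id_le_aop (hφ : ∀ z, φ z 0 = z) : id ≤ Aop φ := by
  intro g z
  calc
    g z = g (φ z 0) := by rw [hφ]
    _ ≤ Aop φ g z := le_concaveEnvelope (fun d ↦ g (φ z d)) 0

theorem aop_iterate_le {g u : Z → EReal} (hgu : g ≤ u) (hu : Aop φ u ≤ u) (n : ℕ) :
    (Aop φ)^[n] g ≤ u :=
  (aop_mono.iterate n hgu).trans (aop_mono.antitone_iterate_of_map_le hu n.zero_le)

theorem exists_iSup_aop_iterate_eq_coe {f u : Z → ℝ} (hfu : f ≤ u)
    (hu : Aop φ (fun z ↦ (u z : EReal)) ≤ fun z ↦ (u z : EReal)) (z : Z) :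
    ∃ r : ℝ, (⨆ n : ℕ, (Aop φ)^[n] (fun z ↦ (f z : EReal)) z) = r := by
  have hfu' : (fun z ↦ (f z : EReal)) ≤ fun z ↦ (u z : EReal) :=
    fun z ↦ EReal.coe_le_coe_iff.2 (hfu z)
  have upper : (⨆ n : ℕ, (Aop φ)^[n] (fun z ↦ (f z : EReal)) z) ≤ u z :=
    iSup_le fun n ↦ aop_iterate_le hfu' hu n z
  have lower : f z ≤ ⨆ n : ℕ, (Aop φ)^[n] (fun z ↦ (f z : EReal)) z :=
    le_iSup (fun n : ℕ ↦ (Aop φ)^[n] (fun z ↦ (f z : EReal)) z) 0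
  exact ⟨_, (EReal.coe_toReal (ne_top_of_le_ne_top (EReal.coe_ne_top _) upper)
    (ne_bot_of_le_ne_bot (EReal.coe_ne_bot _) lower)).symm⟩

end Aop

section RpowTangent

variable {p q t y : ℝ}

/-- The tangent line of `t ↦ t ^ p` at `y`, evaluated at `t`. -/
noncomputable def rpowTangent (p y t : ℝ) : ℝ :=
  y ^ p + p * y ^ (p - 1) * (t - y)

@[simp]
theorem rpowTangent_self (p y : ℝ) : rpowTangent p y y = y ^ p := by
  simp [rpowTangent]

theorem rpowTangent_le_rpow (hp : 1 ≤ p) (hy : 0 ≤ y) (ht : 0 ≤ t) : rpowTangent p y t ≤ t ^ p := by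
  rcases hy.eq_or_lt with rfl | hy
  · rcases hp.eq_or_lt with rfl | hp
    · simp [rpowTangent]
    · simpa [rpowTangent, Real.zero_rpow (by linarith : p ≠ 0),
        Real.zero_rpow (by linarith : p - 1 ≠ 0)] using Real.rpow_nonneg ht p
  have bernoulli : 1 + p * (t / y - 1) ≤ (t / y) ^ p := by
    have hty : -1 ≤ t / y - 1 := by linarith [div_nonneg ht hy.le]
    simpa using one_add_mul_self_le_rpow_one_add hty hp
  calc
    rpowTangent p y t = (1 + p * (t / y - 1)) * y ^ p := by
      rw [rpowTangent, Real.rpow_sub_one hy.ne']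
      field_simp
    _ ≤ (t / y) ^ p * y ^ p := mul_le_mul_of_nonneg_right bernoulli (by positivity)
    _ = t ^ p := by rw [Real.div_rpow ht hy.le, div_mul_cancel₀ _ (by positivity)]

theorem rpowTangent_le_rpowTangent_max (hp : 1 ≤ p) (hy : 0 ≤ y) (ht : 0 ≤ t) :
    rpowTangent p y t ≤ rpowTangent p (max y t) t := by
  rcases le_total t y with h | h
  · rw [max_eq_left h]
  · rw [max_eq_right h, rpowTangent_self]
    exact rpowTangent_le_rpow hp hy ht

theorem neg_mul_rpowTangent_eq (hpq : p.HolderConjugate q) (hy : 0 ≤ y) (t : ℝ) :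
    -(q * rpowTangent p y t) = y ^ p - rpowTangent p y (q * t) := by
  have hyp : y ^ p = y ^ (p - 1) * y := by
    simpa using Real.rpow_add_one' hy (by simpa using hpq.ne_zero : p - 1 + 1 ≠ 0)
  rw [rpowTangent, rpowTangent, hyp]
  linear_combination y ^ (p - 1) * y * hpq.mul_eq_add

theorem convexOn_rpowTangent_norm_add {X : Type*} [NormedAddCommGroup X] [NormedSpace ℝ X]
    (hp : 0 ≤ p) (hy : 0 ≤ y) (x : X) :
    ConvexOn ℝ univ fun d : X ↦ rpowTangent p y ‖x + d‖ := by
  have hnorm : ConvexOn ℝ univ fun d : X ↦ ‖x + d‖ := by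
    simpa [Function.comp_def] using (convexOn_univ_norm (E := X)).translate_right x
  have hslope : 0 ≤ p * y ^ (p - 1) := by positivity
  refine ((hnorm.smul hslope).add_const (y ^ p - p * y ^ (p - 1) * y)).congr fun d _ ↦ ?_
  simp only [Pi.add_apply, smul_eq_mul, rpowTangent]
  ring

end RpowTangent

/-- The state space `{(x, y) : |x| ≤ y}` of Doob's inequality: `x` is the current position and `y`
a bound for the norms of the past ones. -/
abbrev DoobState (X : Type*) [NormedAddCommGroup X] : Type _ :=
  {z : X × ℝ // ‖z.1‖ ≤ z.2}

namespace DoobState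

variable {X : Type*} [NormedAddCommGroup X]

theorem snd_nonneg (z : DoobState X) : 0 ≤ z.1.2 :=
  (norm_nonneg _).trans z.2

/-- The state `(x, |x|)`, in which the current position attains the running maximum. -/
def diag (x : X) : DoobState X :=
  ⟨(x, ‖x‖), le_rfl⟩

end DoobState

/-- The function `f_c(x, y) = y ^ p - c * |x| ^ p`, with real values. -/
noncomputable def doobReward {X : Type*} [NormedAddCommGroup X] (p c : ℝ) (z : DoobState X) : ℝ :=
  z.1.2 ^ p - c * ‖z.1.1‖ ^ p

/-- The function `U(x, y) = -q * T_y(|x|)`, where `T_y` is the tangent line of `t ^ p` at `y`.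
For conjugate exponents it is the majorant `p * y ^ p - p * q * y ^ (p - 1) * |x|` of `f_c`,
`c ≥ q ^ p`. -/
noncomputable def doobMajorant {X : Type*} [NormedAddCommGroup X] (p q : ℝ) (z : DoobState X) : ℝ :=
  -(q * rpowTangent p z.1.2 ‖z.1.1‖)

theorem doobReward_le_doobMajorant {X : Type*} [NormedAddCommGroup X] {p q c : ℝ}
    (hpq : p.HolderConjugate q) (hc : q ^ p ≤ c) :
    (doobReward p c : DoobState X → ℝ) ≤ doobMajorant p q := by
  intro z
  have hqx : 0 ≤ q * ‖z.1.1‖ := mul_nonneg hpq.symm.nonneg (norm_nonneg _)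
  calc
    z.1.2 ^ p - c * ‖z.1.1‖ ^ p ≤ z.1.2 ^ p - q ^ p * ‖z.1.1‖ ^ p := by gcongr
    _ = z.1.2 ^ p - (q * ‖z.1.1‖) ^ p := by
      rw [Real.mul_rpow hpq.symm.nonneg (norm_nonneg _)]
    _ ≤ z.1.2 ^ p - rpowTangent p z.1.2 (q * ‖z.1.1‖) :=
      sub_le_sub_left (rpowTangent_le_rpow hpq.lt.le z.snd_nonneg hqx) _
    _ = doobMajorant p q z := (neg_mul_rpowTangent_eq hpq z.snd_nonneg _).symm

/-- A fair bet multiplying the position by `u ≥ 1` with probability `a` and by `d ≤ 1` with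
probability `1 - a`. By `a * u ^ p = 1` the winning branch alone preserves the expected `p`-th
power of the position. -/
structure IsDoobBet (p a u d : ℝ) : Prop where
  prob_pos : 0 < a
  prob_lt_one : a < 1
  one_le_up : 1 ≤ u
  down_nonneg : 0 ≤ d
  down_le_one : d ≤ 1
  prob_mul_up_rpow : a * u ^ p = 1
  fair : a * u + (1 - a) * d = 1

theorem isDoobBet_slope {p q a : ℝ} (hpq : p.HolderConjugate q) (ha₀ : 0 < a) (ha₁ : a < 1) :
    IsDoobBet p a (a ^ (-p⁻¹)) (slope (fun t : ℝ ↦ t ^ q⁻¹) 1 a) := by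
  have hslope : slope (fun t : ℝ ↦ t ^ q⁻¹) 1 a = (1 - a ^ q⁻¹) / (1 - a) := by
    rw [slope_def_field, Real.one_rpow, ← neg_div_neg_eq, neg_sub, neg_sub]
  have ha : a ≤ a ^ q⁻¹ := by
    simpa using Real.rpow_le_rpow_of_exponent_ge ha₀ ha₁.le (inv_le_one_of_one_le₀ hpq.symm.lt.le)
  have ha' : a ^ q⁻¹ ≤ 1 := Real.rpow_le_one ha₀.le ha₁.le hpq.symm.inv_nonneg
  have hup : a * a ^ (-p⁻¹) = a ^ q⁻¹ := by
    rw [← Real.rpow_one_add' ha₀.le] <;> rw [← sub_eq_add_neg, hpq.one_sub_inv]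
    exact hpq.symm.inv_ne_zero
  refine ⟨ha₀, ha₁, ?_, ?_, ?_, ?_, ?_⟩
  · exact Real.one_le_rpow_of_pos_of_le_one_of_nonpos ha₀ ha₁.le (neg_nonpos.2 hpq.inv_nonneg)
  · rw [hslope]
    exact div_nonneg (by linarith) (by linarith)
  · rw [hslope]
    exact div_le_one_of_le₀ (by linarith) (by linarith)
  · rw [← Real.rpow_mul ha₀.le, neg_mul, inv_mul_cancel₀ hpq.ne_zero, Real.rpow_neg_one,
      mul_inv_cancel₀ ha₀.ne']
  · rw [hup, hslope, mul_div_cancel₀ _ (by linarith)]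
    ring

theorem exists_isDoobBet {p q c : ℝ} (hpq : p.HolderConjugate q) (hc : c < q ^ p) :
    ∃ a u d, IsDoobBet p a u d ∧ c * d ^ p < 1 := by
  have hderiv : HasDerivAt (fun t : ℝ ↦ t ^ q⁻¹) q⁻¹ 1 := by
    simpa using Real.hasDerivAt_rpow_const (x := 1) (p := q⁻¹) (Or.inl one_ne_zero)
  have hslope : Tendsto (slope (fun t : ℝ ↦ t ^ q⁻¹) 1) (𝓝[<] 1) (𝓝 q⁻¹) :=
    hderiv.tendsto_slope.mono_left (nhdsLT_le_nhdsNE 1)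
  have hcost : Tendsto (fun a ↦ c * slope (fun t : ℝ ↦ t ^ q⁻¹) 1 a ^ p) (𝓝[<] 1)
      (𝓝 (c * q⁻¹ ^ p)) :=
    (hslope.rpow_const (Or.inr hpq.nonneg)).const_mul c
  have hlimit : c * q⁻¹ ^ p < 1 := by
    rw [Real.inv_rpow hpq.symm.nonneg, ← div_eq_mul_inv,
      div_lt_one (Real.rpow_pos_of_pos hpq.symm.pos p)]
    exact hc
  obtain ⟨a, hca, ha₀, ha₁⟩ :=
    ((hcost.eventually_lt_const hlimit).and (Ioo_mem_nhdsLT zero_lt_one)).exists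
  exact ⟨a, _, _, isDoobBet_slope hpq ha₀ ha₁, hca⟩

section Doob

variable {X : Type*} [NormedAddCommGroup X] [NormedSpace ℝ X] {p q c a u d r : ℝ}

open DoobState

theorem doobPhi_zero (z : DoobState X) : doobPhi X z 0 = z := by
  ext <;> simp [doobPhi, z.2]

theorem aop_doobMajorant_le (hp : 1 ≤ p) (hq : 0 ≤ q) :
    Aop (doobPhi X) (fun z ↦ (doobMajorant p q z : EReal)) ≤
      fun z ↦ (doobMajorant p q z : EReal) := by
  intro (z : DoobState X)
  have hconcave : ConcaveOn ℝ univ fun d : X ↦ -(q * rpowTangent p z.1.2 ‖z.1.1 + d‖) :=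
    ((convexOn_rpowTangent_norm_add (by linarith) z.snd_nonneg z.1.1).smul hq).neg
  have hle : (fun d ↦ (doobMajorant p q (doobPhi X z d) : EReal)) ≤
      fun d ↦ ((-(q * rpowTangent p z.1.2 ‖z.1.1 + d‖) : ℝ) : EReal) := fun d ↦
    EReal.coe_le_coe_iff.2 <| neg_le_neg <| mul_le_mul_of_nonneg_left
      (rpowTangent_le_rpowTangent_max hp z.snd_nonneg (norm_nonneg _)) hq
  refine (concaveEnvelope_le (isEConcave_coe_iff.2 hconcave) hle 0).trans_eq ?_
  simp [doobMajorant]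

theorem exists_iSup_aop_iterate_doobReward_eq_coe (hpq : p.HolderConjugate q) (hc : q ^ p ≤ c)
    (z : DoobState X) :
    ∃ r : ℝ, (⨆ n : ℕ, (Aop (doobPhi X))^[n] (fun z ↦ (doobReward p c z : EReal)) z) = r :=
  exists_iSup_aop_iterate_eq_coe (doobReward_le_doobMajorant hpq hc)
    (aop_doobMajorant_le hpq.lt.le hpq.symm.nonneg) z

theorem doobPhi_diag_up (hu : 1 ≤ u) (x : X) :
    doobPhi X (diag x) ((u - 1) • x) = diag (u • x) := by
  have hx : x + (u - 1) • x = u • x := by module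
  have hnorm : ‖x‖ ≤ ‖u • x‖ := by
    rw [norm_smul, Real.norm_of_nonneg (by linarith)]
    exact le_mul_of_one_le_left (norm_nonneg x) hu
  ext <;> simp [doobPhi, diag, hx, hnorm]

theorem doobReward_doobPhi_diag_down (hd₀ : 0 ≤ d) (hd₁ : d ≤ 1) (x : X) :
    doobReward p c (doobPhi X (diag x) ((d - 1) • x)) = (1 - c * d ^ p) * ‖x‖ ^ p := by
  have hx : x + (d - 1) • x = d • x := by module
  have hnorm : ‖d • x‖ = d * ‖x‖ := by rw [norm_smul, Real.norm_of_nonneg hd₀]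
  have hmax : max ‖x‖ (d * ‖x‖) = ‖x‖ := max_eq_left (mul_le_of_le_one_left (norm_nonneg x) hd₁)
  simp only [doobReward, doobPhi, diag, hx, hnorm, hmax, Real.mul_rpow hd₀ (norm_nonneg x)]
  ring

theorem IsDoobBet.le_aop_diag {g : DoobState X → EReal} (hbet : IsDoobBet p a u d)
    (hfg : (fun z ↦ (doobReward p c z : EReal)) ≤ g)
    (hg : ∀ x, ((r * ‖x‖ ^ p : ℝ) : EReal) ≤ g (diag x)) (x : X) :
    (((r + (1 - a) * (1 - c * d ^ p)) * ‖x‖ ^ p : ℝ) : EReal) ≤ Aop (doobPhi X) g (diag x) := by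
  have hu₀ : 0 ≤ u := zero_le_one.trans hbet.one_le_up
  have win : ((r * (u ^ p * ‖x‖ ^ p) : ℝ) : EReal) ≤ g (doobPhi X (diag x) ((u - 1) • x)) := by
    simpa [doobPhi_diag_up hbet.one_le_up, norm_smul, abs_of_nonneg hu₀,
      Real.mul_rpow hu₀ (norm_nonneg x)] using hg (u • x)
  have lose : (((1 - c * d ^ p) * ‖x‖ ^ p : ℝ) : EReal) ≤
      g (doobPhi X (diag x) ((d - 1) • x)) := by
    rw [← doobReward_doobPhi_diag_down hbet.down_nonneg hbet.down_le_one]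
    exact hfg _
  have fair : a • (u - 1) • x + (1 - a) • (d - 1) • x = 0 := by
    rw [smul_smul, smul_smul, ← add_smul]
    convert zero_smul ℝ x using 2
    linear_combination hbet.fair
  have value : (r + (1 - a) * (1 - c * d ^ p)) * ‖x‖ ^ p =
      a * (r * (u ^ p * ‖x‖ ^ p)) + (1 - a) * ((1 - c * d ^ p) * ‖x‖ ^ p) := by
    linear_combination -(r * ‖x‖ ^ p) * hbet.prob_mul_up_rpow
  rw [value, Aop, ← fair]
  exact coe_combo_le_concaveEnvelope hbet.prob_pos.le (sub_nonneg.2 hbet.prob_lt_one.le)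
    (add_sub_cancel a 1) win lose

theorem IsDoobBet.le_aop_iterate_diag (hbet : IsDoobBet p a u d) (n : ℕ) (x : X) :
    (((1 - c + n * ((1 - a) * (1 - c * d ^ p))) * ‖x‖ ^ p : ℝ) : EReal) ≤
      (Aop (doobPhi X))^[n] (fun z ↦ (doobReward p c z : EReal)) (diag x) := by
  induction n generalizing x with
  | zero => simp [doobReward, diag, sub_mul]
  | succ n ih =>
    rw [Function.iterate_succ_apply', Nat.cast_succ, add_one_mul, ← add_assoc]
    exact hbet.le_aop_diag (Function.id_le_iterate_of_id_le (id_le_aop doobPhi_zero) n _) ih x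

theorem le_aop_of_le_diag [Nontrivial X] {g : DoobState X → EReal} {m : EReal} (z : DoobState X)
    (hg : ∀ x, ‖x‖ = z.1.2 → m ≤ g (diag x)) : m ≤ Aop (doobPhi X) g z := by
  have hsphere : ∀ d ∈ sphere (-z.1.1) z.1.2, m ≤ g (doobPhi X z d) := by
    intro d hd
    have hnorm : ‖z.1.1 + d‖ = z.1.2 := by simpa [dist_eq_norm, add_comm] using hd
    have hdiag : doobPhi X z d = diag (z.1.1 + d) := by ext <;> simp [doobPhi, diag, hnorm]
    rw [hdiag]
    exact hg _ hnorm
  refine le_concaveEnvelope_of_mem_convexHull hsphere ?_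
  rw [convexHull_sphere_eq_closedBall _ z.snd_nonneg]
  simpa using z.2

theorem iSup_aop_iterate_doobReward_eq_top [Nontrivial X] (hpq : p.HolderConjugate q)
    (hc : c < q ^ p) (z : DoobState X) (hz : 0 < z.1.2) :
    (⨆ n : ℕ, (Aop (doobPhi X))^[n] (fun z ↦ (doobReward p c z : EReal)) z) = ⊤ := by
  obtain ⟨a, u, d, hbet, hcd⟩ := exists_isDoobBet hpq hc
  have gain_pos : 0 < (1 - a) * (1 - c * d ^ p) :=
    mul_pos (sub_pos.2 hbet.prob_lt_one) (sub_pos.2 hcd)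
  have unbounded : Tendsto
      (fun n : ℕ ↦ (1 - c + n * ((1 - a) * (1 - c * d ^ p))) * z.1.2 ^ p) atTop atTop :=
    (tendsto_atTop_add_const_left _ _
      (tendsto_natCast_atTop_atTop.atTop_mul_const gain_pos)).atTop_mul_const (by positivity)
  refine (EReal.eq_top_iff_forall_lt _).2 fun M ↦ ?_
  obtain ⟨n, hn⟩ := (unbounded.eventually_gt_atTop M).exists
  refine (EReal.coe_lt_coe_iff.2 hn).trans_le (le_iSup_of_le (n + 1) ?_)
  rw [Function.iterate_succ_apply']
  exact le_aop_of_le_diag z fun x hx ↦ hx ▸ hbet.le_aop_iterate_diag n x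

end Doob

/-- For `1 < p < ∞` and `f_c(x,y) = y^p - c|x|^p` on `Z = {|x| ≤ y}`:
if `0 ≤ c < (p/(p-1))^p` then `A^∞f_c = +∞` at every state with `y > 0`, whereas if
`c ≥ (p/(p-1))^p` then `A^∞f_c` is finite (real-valued) on all of `Z`. -/
theorem doob_optimal_constant {X : Type*} [NormedAddCommGroup X] [NormedSpace ℝ X]
    [Nontrivial X] (p : ℝ) (hp : 1 < p) (c : ℝ) (hc : 0 ≤ c)
    (f : {z : X × ℝ // ‖z.1‖ ≤ z.2} → EReal)
    (hf : ∀ z, f z = ((z.1.2 ^ p - c * ‖z.1.1‖ ^ p : ℝ) : EReal)) :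
    (c < (p / (p - 1)) ^ p →
      ∀ z : {z : X × ℝ // ‖z.1‖ ≤ z.2}, 0 < z.1.2 →
        (⨆ n : ℕ, (Aop (doobPhi X))^[n] f z) = ⊤) ∧
    ((p / (p - 1)) ^ p ≤ c →
      ∀ z : {z : X × ℝ // ‖z.1‖ ≤ z.2},
        ∃ r : ℝ, (⨆ n : ℕ, (Aop (doobPhi X))^[n] f z) = (r : EReal)) := by
  obtain rfl : f = fun z ↦ (doobReward p c z : EReal) := funext hf
  have hpq : p.HolderConjugate (p / (p - 1)) := Real.HolderConjugate.conjExponent hp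
  exact ⟨fun hlt z hz ↦ iSup_aop_iterate_doobReward_eq_top hpq hlt z hz,
    fun hle z ↦ exists_iSup_aop_iterate_doobReward_eq_coe hpq hle z⟩
end

section
/- Let 1 < p < ∞, p* = max(p, p/(p−1)), and let H be a real Hilbert space. Let M¹, M² be H-valued simple martingales (on a common filtered probability space, taking finitely many values) with (M¹₀, M²₀) = (x₁, x₂) and such that M² is differentially subordinate to M¹: |M²_{t+1} − M²_t| ≤ |M¹_{t+1} − M¹_t| almost surely for all t ≥ 0. Then for every T ∈ ℕ, E[|M²_T|^p − (p*−1)^p |M¹_T|^p] ≤ u(x₁, x₂), where u(x₁, x₂) = p(1−1/p*)^{p−1}(|x₂| − (p*−1)|x₁|)(|x₁|+|x₂|)^{p−1} if (1 < p ≤ 2 and |x₂| ≤ (p*−1)|x₁|) or (2 ≤ p and |x₂| > (p*−1)|x₁|), and u(x₁,x₂) = |x₂|^p − (p*−1)^p|x₁|^p otherwise. In particular, if x₁ = x₂ then ‖M²_T‖_{L^p} ≤ (p*−1) ‖M¹_T‖_{L^p}. -/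
open MeasureTheory

/-!
For `2 ≤ p` let `V a b = b^p - (p-1)^p a^p`. Burkholder's special function `Phi` equals `V` below
the cone `b = (p-1)a` and a majorant `U` of `V` above it, where the constant in `U` is chosen so
that `U` and `V` have the same gradient on the cone. Along a line `s ↦ (x + s h, y + s k)` with
`|k| ≤ |h|` the functions `U(|x|, |y|)` and `V(|x|, |y|)` are concave in their regions, so the glued
function `Phi(|x|, |y|)` is concave along the whole line and lies below its tangents. The tangent
inequality at `(X_t, Y_t)` in the direction of the next increment has a linear term of mean zero, so
`∫ Phi(|X_t|, |Y_t|)` decreases in `t`, and `V ≤ Phi` gives the bound. The singularity of the norm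
at the origin is avoided by working with `√(|x|² + ε²)` and letting `ε → 0`.

For `p ≤ 2` all these inequalities, including the comparison of `|h|` and `|k|`, are reversed, so
the theorem follows with the two martingales exchanged. Both cases are treated at once by
multiplying by a constant `δ` with the sign of `p - 2`.
-/

namespace Burkholder

open Filter Set Topology
open scoped RealInnerProductSpace

section Gluing

section NormedSpace

variable {𝕜 E : Type*} [NontriviallyNormedField 𝕜] [NormedAddCommGroup E] [NormedSpace 𝕜 E]
  {f₁ f₂ g₁ g₂ : 𝕜 → E} {S : Set 𝕜} [DecidablePred (· ∈ S)] {x : 𝕜} {d : E}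

lemma hasDerivWithinAt_piecewise
    (hd : x ∈ closure S → HasDerivAt f₁ d x) (hf : x ∈ frontier S → f₁ x = f₂ x) :
    HasDerivWithinAt (S.piecewise f₁ f₂) d S x := by
  by_cases hx : x ∈ closure S
  · refine (hd hx).hasDerivWithinAt.congr (fun z hz ↦ piecewise_eq_of_mem _ _ _ hz) ?_
    by_cases hxS : x ∈ S
    · exact piecewise_eq_of_mem _ _ _ hxS
    · rw [piecewise_eq_of_notMem _ _ _ hxS, hf ⟨hx, fun h ↦ hxS (interior_subset h)⟩]
  · exact HasFDerivWithinAt.of_notMem_closure hx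

lemma hasDerivWithinAt_piecewise_compl
    (hd : x ∈ closure Sᶜ → HasDerivAt f₂ d x) (hf : x ∈ frontier S → f₁ x = f₂ x) :
    HasDerivWithinAt (S.piecewise f₁ f₂) d Sᶜ x := by
  classical
  rw [← piecewise_compl]
  exact hasDerivWithinAt_piecewise hd fun hx ↦ (hf (frontier_compl S ▸ hx)).symm

lemma hasDerivAt_piecewise (hf₁ : HasDerivAt f₁ (g₁ x) x)
    (hf₂ : HasDerivAt f₂ (g₂ x) x) (hf : x ∈ frontier S → f₁ x = f₂ x)
    (hg : x ∈ frontier S → g₁ x = g₂ x) :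
    HasDerivAt (S.piecewise f₁ f₂) (S.piecewise g₁ g₂ x) x := by
  have hS : HasDerivWithinAt (S.piecewise f₁ f₂) (S.piecewise g₁ g₂ x) S x := by
    refine hasDerivWithinAt_piecewise (fun hx ↦ ?_) hf
    by_cases hxS : x ∈ S
    · rwa [piecewise_eq_of_mem _ _ _ hxS]
    · rwa [piecewise_eq_of_notMem _ _ _ hxS, ← hg ⟨hx, fun h ↦ hxS (interior_subset h)⟩]
  have hSc : HasDerivWithinAt (S.piecewise f₁ f₂) (S.piecewise g₁ g₂ x) Sᶜ x := by
    refine hasDerivWithinAt_piecewise_compl (fun hx ↦ ?_) hf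
    by_cases hxS : x ∈ S
    · rwa [piecewise_eq_of_mem _ _ _ hxS,
        hg (frontier_compl S ▸ ⟨hx, fun h ↦ interior_subset h hxS⟩)]
    · rwa [piecewise_eq_of_notMem _ _ _ hxS]
  simpa using hS.union hSc

end NormedSpace

variable {g g₁ g₂ : ℝ → ℝ} {S : Set ℝ}

lemma antitone_of_hasDerivWithinAt_nonpos (hS : ∀ x, ∃ d ≤ 0, HasDerivWithinAt g d S x)
    (hSc : ∀ x, ∃ d ≤ 0, HasDerivWithinAt g d Sᶜ x) : Antitone g := by
  have hcont : Continuous g := continuous_iff_continuousAt.2 fun x ↦ by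
    obtain ⟨_, -, h⟩ := hS x
    obtain ⟨_, -, hc⟩ := hSc x
    simpa [continuousWithinAt_univ] using h.continuousWithinAt.union hc.continuousWithinAt
  have hslope : ∀ T : Set ℝ, (∀ x, ∃ d ≤ 0, HasDerivWithinAt g d T x) →
      ∀ x r, 0 < r → ∀ᶠ z in 𝓝[T \ {x}] x, slope g x z < r := fun T hT x r hr ↦ by
    obtain ⟨d, hd, h⟩ := hT x
    exact (hasDerivWithinAt_iff_tendsto_slope.1 h).eventually (gt_mem_nhds (hd.trans_lt hr))
  intro a b hab
  refine image_le_of_liminf_slope_right_le_deriv_boundary (B := fun _ ↦ g a) (B' := fun _ ↦ 0)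
    hcont.continuousOn le_rfl continuousOn_const (fun _ _ ↦ hasDerivWithinAt_const _ _ _)
    (fun x _ r hr ↦ Eventually.frequently ?_) (right_mem_Icc.2 hab)
  have hsub : Ioi x ⊆ S \ {x} ∪ Sᶜ \ {x} := fun z (hz : x < z) ↦ by
    simp [← union_sdiff_distrib, hz.ne']
  refine Eventually.filter_mono (nhdsWithin_mono x hsub) ?_
  rw [nhdsWithin_union]
  exact eventually_sup.2 ⟨hslope S hS x r hr, hslope Sᶜ hSc x r hr⟩

lemma antitone_piecewise [DecidablePred (· ∈ S)] {d₁ d₂ : ℝ → ℝ}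
    (hg₁ : ∀ x, HasDerivAt g₁ (d₁ x) x) (hg₂ : ∀ x, HasDerivAt g₂ (d₂ x) x)
    (hd₁ : ∀ x ∈ closure S, d₁ x ≤ 0) (hd₂ : ∀ x ∈ closure Sᶜ, d₂ x ≤ 0)
    (hg : ∀ x ∈ frontier S, g₁ x = g₂ x) : Antitone (S.piecewise g₁ g₂) := by
  refine antitone_of_hasDerivWithinAt_nonpos (S := S) (fun x ↦ ⟨min (d₁ x) 0, min_le_right _ _, ?_⟩)
    fun x ↦ ⟨min (d₂ x) 0, min_le_right _ _, ?_⟩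
  · exact hasDerivWithinAt_piecewise (fun hx ↦ (min_eq_left (hd₁ x hx)).symm ▸ hg₁ x) (hg x)
  · exact hasDerivWithinAt_piecewise_compl (fun hx ↦ (min_eq_left (hd₂ x hx)).symm ▸ hg₂ x) (hg x)

lemma le_add_mul_sub_of_antitone_deriv {f : ℝ → ℝ} (hf : ∀ x, HasDerivAt f (g x) x)
    (hg : Antitone g) (a b : ℝ) : f b ≤ f a + g a * (b - a) := by
  have hconc : ConcaveOn ℝ univ f := Antitone.concaveOn_univ_of_deriv
    (fun x ↦ (hf x).differentiableAt) (by rwa [deriv_eq hf])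
  rcases lt_trichotomy a b with hab | rfl | hba
  · have := hconc.slope_le_of_hasDerivAt (mem_univ a) (mem_univ b) hab (hf a)
    rw [slope_def_field, div_le_iff₀ (sub_pos.2 hab)] at this
    linarith
  · simp
  · have := hconc.le_slope_of_hasDerivAt (mem_univ b) (mem_univ a) hba (hf a)
    rw [slope_def_field, le_div_iff₀ (sub_pos.2 hba)] at this
    linarith

end Gluing

section SpecialFunction

/-- The constant `α_p = p (1 - 1/p)^(p-1)` of Burkholder's majorant. It is the value for which the
majorant `U` and the function `V` match to first order on the cone `b = (p - 1) a`. -/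
noncomputable def alpha (p : ℝ) : ℝ := p * (1 - 1 / p) ^ (p - 1)

/-- Burkholder's majorant `α_p (b - (p-1)a) (a+b)^(p-1)`, where `a` and `b` stand for the norms of
the two martingales. -/
noncomputable def U (p a b : ℝ) : ℝ := alpha p * (b - (p - 1) * a) * (a + b) ^ (p - 1)

/-- The function `b^p - (p-1)^p a^p` whose integral Burkholder's inequality estimates; as in `U`,
the arguments stand for norms. -/
noncomputable def V (p a b : ℝ) : ℝ := b ^ p - (p - 1) ^ p * a ^ p

/-- Burkholder's special function: `U` above the cone `b = (p-1)a` and `V` below it. -/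
noncomputable def Phi (p a b : ℝ) : ℝ := if (p - 1) * a ≤ b then U p a b else V p a b

/-- The partial derivative of `U` in `a`. -/
noncomputable def U₁ (p a b : ℝ) : ℝ := -(alpha p * p * (p - 1) * (a + b) ^ (p - 2) * a)

/-- The partial derivative of `U` in `b`. -/
noncomputable def U₂ (p a b : ℝ) : ℝ := alpha p * p * (a + b) ^ (p - 2) * (b - (p - 2) * a)

/-- The partial derivative of `V` in `a`. -/
noncomputable def V₁ (p a : ℝ) : ℝ := -((p - 1) ^ p * p * a ^ (p - 1))

/-- The partial derivative of `V` in `b`. -/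
noncomputable def V₂ (p b : ℝ) : ℝ := p * b ^ (p - 1)

/-- The partial derivative of `Phi` in `a`. -/
noncomputable def Phi₁ (p a b : ℝ) : ℝ := if (p - 1) * a ≤ b then U₁ p a b else V₁ p a

/-- The partial derivative of `Phi` in `b`. -/
noncomputable def Phi₂ (p a b : ℝ) : ℝ := if (p - 1) * a ≤ b then U₂ p a b else V₂ p b

variable {p : ℝ}

lemma rpow_eq_rpow_sub_one_mul {a : ℝ} (ha : 0 < a) (q : ℝ) : a ^ q = a ^ (q - 1) * a := by
  rw [← Real.rpow_add_one ha.ne', sub_add_cancel]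

lemma alpha_nonneg (hp : 1 ≤ p) : 0 ≤ alpha p :=
  mul_nonneg (by linarith) (Real.rpow_nonneg (sub_nonneg.2 (by
    rw [div_le_one (by linarith)]; exact hp)) _)

lemma alpha_mul_rpow (hp : 1 ≤ p) : alpha p * p ^ (p - 2) = (p - 1) ^ (p - 1) := by
  have hp0 : 0 < p := by linarith
  have hpow : p ^ (p - 1) = p ^ (p - 2) * p := by
    rw [rpow_eq_rpow_sub_one_mul hp0]; ring_nf
  have : 0 < p ^ (p - 2) := Real.rpow_pos_of_pos hp0 _
  rw [alpha, one_sub_div hp0.ne', Real.div_rpow (by linarith) hp0.le, hpow]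
  field_simp

section Cone

variable {a b : ℝ}

lemma U_eq_zero_of_cone (h : (p - 1) * a = b) : U p a b = 0 := by simp [U, h]

lemma V_eq_zero_of_cone (hp : 1 ≤ p) (ha : 0 ≤ a) (h : (p - 1) * a = b) : V p a b = 0 := by
  rw [V, ← h, Real.mul_rpow (by linarith) ha, sub_self]

lemma U₁_eq_V₁_of_cone (hp : 1 < p) (ha : 0 < a) (h : (p - 1) * a = b) : U₁ p a b = V₁ p a := by
  have hab : a + b = p * a := by rw [← h]; ring
  rw [U₁, V₁, hab, Real.mul_rpow (by linarith) ha.le, rpow_eq_rpow_sub_one_mul (sub_pos.2 hp) p,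
    ← alpha_mul_rpow hp.le, rpow_eq_rpow_sub_one_mul ha (p - 1)]
  ring_nf

lemma U₂_eq_V₂_of_cone (hp : 1 < p) (ha : 0 < a) (h : (p - 1) * a = b) : U₂ p a b = V₂ p b := by
  have hab : a + b = p * a := by rw [← h]; ring
  rw [U₂, V₂, hab, ← h, Real.mul_rpow (by linarith) ha.le, Real.mul_rpow (by linarith) ha.le,
    ← alpha_mul_rpow hp.le, rpow_eq_rpow_sub_one_mul ha (p - 1)]
  ring_nf

end Cone

section Curve

variable {a b : ℝ → ℝ} {a' b' s : ℝ}

lemma hasDerivAt_U (ha : HasDerivAt a a' s) (hb : HasDerivAt b b' s) (h : 0 < a s + b s) :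
    HasDerivAt (fun s ↦ U p (a s) (b s)) (U₁ p (a s) (b s) * a' + U₂ p (a s) (b s) * b') s := by
  refine (((hb.sub (ha.const_mul (p - 1))).const_mul (alpha p)).mul
    ((ha.add hb).rpow_const (p := p - 1) (Or.inl h.ne'))).congr_deriv ?_
  simp only [Pi.add_apply, Pi.sub_apply, U₁, U₂, rpow_eq_rpow_sub_one_mul h (p - 1)]
  ring_nf

lemma hasDerivAt_V (ha : HasDerivAt a a' s) (hb : HasDerivAt b b' s) (ha0 : 0 < a s)
    (hb0 : 0 < b s) :
    HasDerivAt (fun s ↦ V p (a s) (b s)) (V₁ p (a s) * a' + V₂ p (b s) * b') s := by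
  refine ((hb.rpow_const (p := p) (Or.inl hb0.ne')).sub
    ((ha.rpow_const (p := p) (Or.inl ha0.ne')).const_mul ((p - 1) ^ p))).congr_deriv ?_
  rw [V₁, V₂]
  ring

end Curve

lemma mul_rpow_le_mul_rpow {δ c x y : ℝ} (hδ : 0 ≤ δ * c) (hx : 0 < x) (hxy : x ≤ y) :
    δ * x ^ c ≤ δ * y ^ c := by
  rcases mul_nonneg_iff.1 hδ with ⟨hδ, hc⟩ | ⟨hδ, hc⟩
  · exact mul_le_mul_of_nonneg_left (Real.rpow_le_rpow hx.le hxy hc) hδ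
  · exact mul_le_mul_of_nonpos_left (Real.rpow_le_rpow_of_nonpos hx hxy hc) hδ

lemma continuous_U (hp : 1 ≤ p) : Continuous fun z : ℝ × ℝ ↦ U p z.1 z.2 := by
  have : Continuous fun z : ℝ × ℝ ↦ (z.1 + z.2) ^ (p - 1) :=
    (continuous_fst.add continuous_snd).rpow_const fun _ ↦ Or.inr (sub_nonneg.2 hp)
  unfold U
  fun_prop

lemma continuous_V (hp : 0 ≤ p) : Continuous fun z : ℝ × ℝ ↦ V p z.1 z.2 :=
  (continuous_snd.rpow_const fun _ ↦ Or.inr hp).sub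
    (continuous_const.mul (continuous_fst.rpow_const fun _ ↦ Or.inr hp))

lemma mul_U₁_le_mul_V₁ {δ a b : ℝ} (hp : 1 < p) (hδ : 0 ≤ δ * (p - 2)) (ha : 0 < a)
    (hab : (p - 1) * a ≤ b) : δ * U₁ p a b ≤ δ * V₁ p a := by
  have hp0 : 0 < p := by linarith
  have hp1 : 0 < p - 1 := sub_pos.2 hp
  have hb : 0 < b := (mul_pos hp1 ha).trans_le hab
  have hmean : δ * a ^ (p - 2) ≤ δ * ((a + b) / p) ^ (p - 2) :=
    mul_rpow_le_mul_rpow hδ ha (by rw [le_div_iff₀ hp0]; linarith)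
  have : 0 < p ^ (p - 2) := Real.rpow_pos_of_pos hp0 _
  have hU : U₁ p a b = -(p * (p - 1) ^ p * a * ((a + b) / p) ^ (p - 2)) := by
    rw [U₁, Real.div_rpow (by positivity) hp0.le, rpow_eq_rpow_sub_one_mul hp1 p,
      ← alpha_mul_rpow hp.le]
    field_simp
  have hV : V₁ p a = -(p * (p - 1) ^ p * a * a ^ (p - 2)) := by
    rw [V₁, rpow_eq_rpow_sub_one_mul ha (p - 1)]
    ring_nf
  have := mul_le_mul_of_nonneg_left hmean (by positivity : 0 ≤ p * (p - 1) ^ p * a)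
  rw [hU, hV]
  linarith

lemma mul_V_le_mul_U {δ a b : ℝ} (hp : 1 < p) (hδ : 0 ≤ δ * (p - 2)) (ha : 0 ≤ a)
    (hab : (p - 1) * a ≤ b) : δ * V p a b ≤ δ * U p a b := by
  have hp1 : 0 < p - 1 := sub_pos.2 hp
  set D : ℝ → ℝ := fun t ↦ δ * (U p t b - V p t b) with hD
  set c := b / (p - 1)
  have hcb : (p - 1) * c = b := mul_div_cancel₀ b hp1.ne'
  have hac : a ≤ c := (le_div_iff₀' hp1).2 hab
  have hDcont : ContinuousOn D (Icc a c) :=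
    (continuous_const.mul (((continuous_U hp.le).comp (Continuous.prodMk_left b)).sub
      ((continuous_V (by linarith)).comp (Continuous.prodMk_left b)))).continuousOn
  have hDderiv : ∀ t ∈ interior (Icc a c), HasDerivAt D (δ * (U₁ p t b - V₁ p t)) t := by
    intro t ht
    rw [interior_Icc] at ht
    have ht0 : 0 < t := ha.trans_lt ht.1
    have hb : 0 < b := hcb ▸ mul_pos hp1 (ht0.trans ht.2)
    have := ((hasDerivAt_U (p := p) (hasDerivAt_id t) (hasDerivAt_const t b) (add_pos ht0 hb)).sub
      (hasDerivAt_V (p := p) (hasDerivAt_id t) (hasDerivAt_const t b) ht0 hb)).const_mul δ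
    simpa using this
  have hanti : AntitoneOn D (Icc a c) := by
    refine antitoneOn_of_deriv_nonpos (convex_Icc a c) hDcont
      (fun t ht ↦ (hDderiv t ht).differentiableAt.differentiableWithinAt) fun t ht ↦ ?_
    rw [(hDderiv t ht).deriv, mul_sub, sub_nonpos]
    rw [interior_Icc] at ht
    exact mul_U₁_le_mul_V₁ hp hδ (ha.trans_lt ht.1)
      (hcb ▸ mul_le_mul_of_nonneg_left ht.2.le hp1.le)
  have hDc : D c = 0 := by
    simp [hD, U_eq_zero_of_cone hcb, V_eq_zero_of_cone hp.le (ha.trans hac) hcb]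
  have := hanti (left_mem_Icc.2 hac) (right_mem_Icc.2 hac) hac
  rw [hDc] at this
  simp only [hD] at this
  linarith

lemma mul_V_le_mul_Phi {δ a b : ℝ} (hp : 1 < p) (hδ : 0 ≤ δ * (p - 2)) (ha : 0 ≤ a) :
    δ * V p a b ≤ δ * Phi p a b := by
  unfold Phi
  split_ifs with hab
  · exact mul_V_le_mul_U hp hδ ha hab
  · exact le_rfl

lemma continuous_Phi_comp {Z : Type*} [TopologicalSpace Z] {a b : Z → ℝ} (hp : 1 ≤ p)
    (ha : Continuous a) (hb : Continuous b) (ha0 : ∀ z, 0 ≤ a z) :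
    Continuous fun z ↦ Phi p (a z) (b z) := by
  refine Continuous.if_le ((continuous_U hp).comp (ha.prodMk hb))
    ((continuous_V (by linarith)).comp (ha.prodMk hb)) (continuous_const.mul ha) hb fun z hz ↦ ?_
  simp [U_eq_zero_of_cone hz, V_eq_zero_of_cone hp (ha0 z) hz]

end SpecialFunction

section NormPath

/-- `IsNormPath a a' H` abstracts how `a s = √(‖x + s h‖² + ε²)` varies along a line with direction
`h`, where `H = ‖h‖²`: since `a²` is a quadratic polynomial with leading coefficient `H`, the
derivative `a'` satisfies `a a'' = H - a'²`. -/
structure IsNormPath (a a' : ℝ → ℝ) (H : ℝ) : Prop where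
  pos : ∀ s, 0 < a s
  hasDerivAt : ∀ s, HasDerivAt a (a' s) s
  hasDerivAt_deriv : ∀ s, HasDerivAt a' ((H - a' s ^ 2) / a s) s
  sq_deriv_le : ∀ s, a' s ^ 2 ≤ H

/-- The second derivative of `U` along a pair of norm paths with current values `a`, `b`,
velocities `a'`, `b'` and squared directions `H`, `K`. -/
noncomputable def hessU (p a b a' b' H K : ℝ) : ℝ :=
  alpha p * p * (a + b) ^ (p - 3) * (-((p - 1) * (p - 2) * a * (a' + b') ^ 2) +
    (a + b) * ((p - 1) * (K - H) - (p - 2) * (a + b) * (K - b' ^ 2) / b))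

/-- The second derivative of `V` along a pair of norm paths, with the conventions of `hessU`. -/
noncomputable def hessV (p a b a' b' H K : ℝ) : ℝ :=
  p * (b ^ (p - 2) * ((p - 2) * b' ^ 2 + K) -
    (p - 1) ^ p * a ^ (p - 2) * ((p - 2) * a' ^ 2 + H))

variable {p δ H K : ℝ}

lemma mul_hessU_nonpos {a b a' b' : ℝ} (hp : 1 ≤ p) (hδ : 0 ≤ δ * (p - 2))
    (hHK : 0 ≤ δ * (H - K)) (ha : 0 < a) (hb : 0 < b) (hbK : b' ^ 2 ≤ K) :
    δ * hessU p a b a' b' H K ≤ 0 := by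
  have hα := alpha_nonneg hp
  have : 0 ≤ p - 1 := sub_nonneg.2 hp
  have hC : 0 ≤ alpha p * p * (a + b) ^ (p - 3) := by positivity
  have hsq : 0 ≤ δ * (p - 2) * ((p - 1) * a * (a' + b') ^ 2) := mul_nonneg hδ (by positivity)
  have hdir : 0 ≤ δ * (H - K) * ((p - 1) * (a + b)) := mul_nonneg hHK (by positivity)
  have hcurv : 0 ≤ δ * (p - 2) * ((a + b) ^ 2 * (K - b' ^ 2) / b) :=
    mul_nonneg hδ (div_nonneg (mul_nonneg (sq_nonneg _) (sub_nonneg.2 hbK)) hb.le)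
  calc δ * hessU p a b a' b' H K
      = -(alpha p * p * (a + b) ^ (p - 3) * (δ * (p - 2) * ((p - 1) * a * (a' + b') ^ 2) +
          δ * (H - K) * ((p - 1) * (a + b)) +
          δ * (p - 2) * ((a + b) ^ 2 * (K - b' ^ 2) / b))) := by rw [hessU]; ring
    _ ≤ 0 := neg_nonpos.2 (mul_nonneg hC (by linarith))

lemma mul_hessV_nonpos {a b a' b' : ℝ} (hp : 1 < p) (hδ : 0 ≤ δ * (p - 2))
    (hHK : 0 ≤ δ * (H - K)) (ha : 0 < a) (hb : 0 < b) (hab : b ≤ (p - 1) * a)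
    (haH : a' ^ 2 ≤ H) (hbK : b' ^ 2 ≤ K) : δ * hessV p a b a' b' H K ≤ 0 := by
  have hp1 : 0 < p - 1 := sub_pos.2 hp
  set P := ((p - 1) * a) ^ (p - 2) with hP
  have : 0 < P := by positivity
  have hPdef : (p - 1) ^ p * a ^ (p - 2) = (p - 1) ^ 2 * P := by
    rw [hP, Real.mul_rpow hp1.le ha.le, rpow_eq_rpow_sub_one_mul hp1 p,
      rpow_eq_rpow_sub_one_mul hp1 (p - 1)]
    ring_nf
  have hQP : δ * b ^ (p - 2) ≤ δ * P := mul_rpow_le_mul_rpow hδ hb hab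
  have hB : 0 ≤ (p - 2) * b' ^ 2 + K := by
    have := mul_nonneg hp1.le (sq_nonneg b')
    linarith
  have hsum : δ * ((p - 2) * b' ^ 2 + K - (p - 1) ^ 2 * ((p - 2) * a' ^ 2 + H)) ≤ 0 := by
    have hbK' := mul_nonneg hδ (sub_nonneg.2 hbK)
    have hHK' := mul_nonneg hHK hp1.le
    have hH' : 0 ≤ δ * (p - 2) * ((p - 1) * (H + (p - 1) * a' ^ 2)) :=
      mul_nonneg hδ (mul_nonneg hp1.le (add_nonneg ((sq_nonneg _).trans haH) (by positivity)))
    linarith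
  calc δ * hessV p a b a' b' H K
      = p * (δ * b ^ (p - 2) * ((p - 2) * b' ^ 2 + K) -
          δ * ((p - 1) ^ 2 * P) * ((p - 2) * a' ^ 2 + H)) := by rw [hessV, hPdef]; ring
    _ ≤ p * (δ * P * ((p - 2) * b' ^ 2 + K) -
          δ * ((p - 1) ^ 2 * P) * ((p - 2) * a' ^ 2 + H)) := by gcongr
    _ = p * P * (δ * ((p - 2) * b' ^ 2 + K - (p - 1) ^ 2 * ((p - 2) * a' ^ 2 + H))) := by ring
    _ ≤ 0 := mul_nonpos_of_nonneg_of_nonpos (by positivity) hsum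

namespace IsNormPath

variable {a a' b b' : ℝ → ℝ}

lemma hasDerivAt_U_deriv (ha : IsNormPath a a' H) (hb : IsNormPath b b' K) (s : ℝ) :
    HasDerivAt (fun s ↦ U₁ p (a s) (b s) * a' s + U₂ p (a s) (b s) * b' s)
      (hessU p (a s) (b s) (a' s) (b' s) H K) s := by
  have hr : 0 < a s + b s := add_pos (ha.pos s) (hb.pos s)
  have hpow : HasDerivAt (fun s ↦ (a s + b s) ^ (p - 2))
      ((a' s + b' s) * (p - 2) * (a s + b s) ^ (p - 3)) s := by
    have h := ((ha.hasDerivAt s).add (hb.hasDerivAt s)).rpow_const (p := p - 2) (Or.inl hr.ne')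
    rw [sub_sub, two_add_one_eq_three] at h
    exact h
  have hlin := (((ha.hasDerivAt s).const_mul (p - 1)).mul (ha.hasDerivAt_deriv s)).neg.add
    (((hb.hasDerivAt s).sub ((ha.hasDerivAt s).const_mul (p - 2))).mul (hb.hasDerivAt_deriv s))
  have hmul := (hpow.const_mul (alpha p * p)).mul hlin
  refine (hmul.congr_deriv ?_).congr_of_eventuallyEq (Eventually.of_forall fun t ↦ ?_)
  · have hpow' : (a s + b s) ^ (p - 2) = (a s + b s) ^ (p - 3) * (a s + b s) := by
      rw [rpow_eq_rpow_sub_one_mul hr (p - 2)]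
      ring_nf
    have := (ha.pos s).ne'
    have := (hb.pos s).ne'
    simp only [Pi.add_apply, Pi.sub_apply, Pi.mul_apply, Pi.neg_apply, hessU, hpow']
    field_simp
    ring
  · simp only [Pi.add_apply, Pi.sub_apply, Pi.mul_apply, Pi.neg_apply, U₁, U₂]
    ring

lemma hasDerivAt_V_deriv (ha : IsNormPath a a' H) (hb : IsNormPath b b' K) (s : ℝ) :
    HasDerivAt (fun s ↦ V₁ p (a s) * a' s + V₂ p (b s) * b' s)
      (hessV p (a s) (b s) (a' s) (b' s) H K) s := by
  have hpow {c c' : ℝ → ℝ} {L : ℝ} (hc : IsNormPath c c' L) :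
      HasDerivAt (fun s ↦ c s ^ (p - 1) * c' s) (c s ^ (p - 2) * ((p - 2) * c' s ^ 2 + L)) s := by
    refine (((hc.hasDerivAt s).rpow_const (p := p - 1) (Or.inl (hc.pos s).ne')).mul
      (hc.hasDerivAt_deriv s)).congr_deriv ?_
    have := (hc.pos s).ne'
    rw [rpow_eq_rpow_sub_one_mul (hc.pos s) (p - 1), sub_sub, one_add_one_eq_two]
    field_simp
    ring
  refine ((((hpow hb).sub ((hpow ha).const_mul ((p - 1) ^ p))).const_mul p).congr_deriv
    ?_).congr_of_eventuallyEq (Eventually.of_forall fun t ↦ ?_)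
  · rw [hessV]
    ring
  · simp only [Pi.sub_apply, V₁, V₂]
    ring

lemma continuous (ha : IsNormPath a a' H) : Continuous a :=
  continuous_iff_continuousAt.2 fun s ↦ (ha.hasDerivAt s).continuousAt

lemma eq_of_mem_frontier_cone (ha : IsNormPath a a' H) (hb : IsNormPath b b' K) {s : ℝ}
    (hs : s ∈ frontier {s | (p - 1) * a s ≤ b s}) : (p - 1) * a s = b s :=
  frontier_le_subset_eq (continuous_const.mul ha.continuous) hb.continuous hs

lemma Phi_deriv_eq_of_cone (ha : IsNormPath a a' H) (hp : 1 < p) {s : ℝ}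
    (hs : (p - 1) * a s = b s) :
    U₁ p (a s) (b s) * a' s + U₂ p (a s) (b s) * b' s =
      V₁ p (a s) * a' s + V₂ p (b s) * b' s := by
  rw [U₁_eq_V₁_of_cone hp (ha.pos s) hs, U₂_eq_V₂_of_cone hp (ha.pos s) hs]

lemma hasDerivAt_Phi (ha : IsNormPath a a' H) (hb : IsNormPath b b' K) (hp : 1 < p) (s : ℝ) :
    HasDerivAt (fun s ↦ Phi p (a s) (b s))
      (Phi₁ p (a s) (b s) * a' s + Phi₂ p (a s) (b s) * b' s) s := by
  have h := hasDerivAt_piecewise (S := {s | (p - 1) * a s ≤ b s})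
    (g₁ := fun s ↦ U₁ p (a s) (b s) * a' s + U₂ p (a s) (b s) * b' s)
    (g₂ := fun s ↦ V₁ p (a s) * a' s + V₂ p (b s) * b' s)
    (hasDerivAt_U (ha.hasDerivAt s) (hb.hasDerivAt s) (add_pos (ha.pos s) (hb.pos s)))
    (hasDerivAt_V (ha.hasDerivAt s) (hb.hasDerivAt s) (ha.pos s) (hb.pos s))
    (fun hs ↦ by rw [U_eq_zero_of_cone (ha.eq_of_mem_frontier_cone hb hs),
      V_eq_zero_of_cone hp.le (ha.pos s).le (ha.eq_of_mem_frontier_cone hb hs)])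
    (fun hs ↦ ha.Phi_deriv_eq_of_cone hp (ha.eq_of_mem_frontier_cone hb hs))
  refine h.congr_deriv ?_
  simp only [piecewise, mem_ofPred_eq, Phi₁, Phi₂]
  split_ifs <;> rfl

lemma antitone_mul_Phi_deriv (ha : IsNormPath a a' H) (hb : IsNormPath b b' K) (hp : 1 < p)
    (hδ : 0 ≤ δ * (p - 2)) (hHK : 0 ≤ δ * (H - K)) :
    Antitone fun s ↦ δ * (Phi₁ p (a s) (b s) * a' s + Phi₂ p (a s) (b s) * b' s) := by
  classical
  set S : Set ℝ := {s | (p - 1) * a s ≤ b s}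
  have hSc : ∀ s ∈ closure Sᶜ, b s ≤ (p - 1) * a s := by
    have : Sᶜ = {s | b s < (p - 1) * a s} := by ext; simp [S]
    exact this ▸ closure_lt_subset_le hb.continuous (continuous_const.mul ha.continuous)
  have hanti := antitone_piecewise (S := S)
    (fun s ↦ (ha.hasDerivAt_U_deriv (p := p) hb s).const_mul δ)
    (fun s ↦ (ha.hasDerivAt_V_deriv hb s).const_mul δ)
    (fun s _ ↦ mul_hessU_nonpos hp.le hδ hHK (ha.pos s) (hb.pos s) (hb.sq_deriv_le s))
    (fun s hs ↦ mul_hessV_nonpos hp hδ hHK (ha.pos s) (hb.pos s) (hSc s hs) (ha.sq_deriv_le s)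
      (hb.sq_deriv_le s))
    (fun s hs ↦ congrArg (δ * ·) (ha.Phi_deriv_eq_of_cone hp (ha.eq_of_mem_frontier_cone hb hs)))
  convert hanti using 1
  ext s
  simp only [piecewise, S, mem_ofPred_eq, Phi₁, Phi₂]
  split_ifs <;> rfl

lemma mul_Phi_le_tangent (ha : IsNormPath a a' H) (hb : IsNormPath b b' K) (hp : 1 < p)
    (hδ : 0 ≤ δ * (p - 2)) (hHK : 0 ≤ δ * (H - K)) (s t : ℝ) :
    δ * Phi p (a t) (b t) ≤ δ * Phi p (a s) (b s) +
      δ * (Phi₁ p (a s) (b s) * a' s + Phi₂ p (a s) (b s) * b' s) * (t - s) :=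
  le_add_mul_sub_of_antitone_deriv (fun s ↦ (ha.hasDerivAt_Phi hb hp s).const_mul δ)
    (ha.antitone_mul_Phi_deriv hb hp hδ hHK) s t

end IsNormPath

end NormPath

section InnerProductSpace

variable {E F : Type*} [NormedAddCommGroup E] [NormedAddCommGroup F]

/-- The regularized norm `√(‖x‖² + ε²)`, which is smooth and positive for `ε ≠ 0` and is the norm
itself for `ε = 0`. -/
noncomputable def regNorm (ε : ℝ) (x : E) : ℝ := √(‖x‖ ^ 2 + ε ^ 2)

lemma regNorm_nonneg (ε : ℝ) (x : E) : 0 ≤ regNorm ε x := Real.sqrt_nonneg _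

lemma regNorm_zero (x : E) : regNorm 0 x = ‖x‖ := by simp [regNorm]

lemma continuous_regNorm (x : E) : Continuous fun ε ↦ regNorm ε x := by
  unfold regNorm
  fun_prop

variable [InnerProductSpace ℝ E] [InnerProductSpace ℝ F]

lemma isNormPath_regNorm {ε : ℝ} (hε : ε ≠ 0) (x h : E) :
    IsNormPath (fun s : ℝ ↦ regNorm ε (x + s • h))
      (fun s ↦ ⟪x + s • h, h⟫ / regNorm ε (x + s • h)) (‖h‖ ^ 2) := by
  have hpos (s : ℝ) : 0 < ‖x + s • h‖ ^ 2 + ε ^ 2 := by positivity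
  have hpos' (s : ℝ) : 0 < regNorm ε (x + s • h) := Real.sqrt_pos.2 (hpos s)
  have hline (s : ℝ) : HasDerivAt (fun s : ℝ ↦ x + s • h) h s := by
    simpa using ((hasDerivAt_id s).smul_const h).const_add x
  have hderiv (s : ℝ) : HasDerivAt (fun s : ℝ ↦ regNorm ε (x + s • h))
      (⟪x + s • h, h⟫ / regNorm ε (x + s • h)) s := by
    exact ((hline s).norm_sq.add_const (ε ^ 2)).sqrt (hpos s).ne' |>.congr_deriv
      (mul_div_mul_left _ _ two_ne_zero)
  refine ⟨hpos', hderiv, fun s ↦ ?_, fun s ↦ ?_⟩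
  · have hinner : HasDerivAt (fun s : ℝ ↦ ⟪x + s • h, h⟫) (‖h‖ ^ 2) s := by
      simpa using (hline s).inner ℝ (hasDerivAt_const s h)
    refine (hinner.div (hderiv s) (hpos' s).ne').congr_deriv ?_
    have := (hpos' s).ne'
    field_simp
  · rw [div_pow, div_le_iff₀ (pow_pos (hpos' s) 2), regNorm, Real.sq_sqrt (hpos s).le]
    calc ⟪x + s • h, h⟫ ^ 2 ≤ (‖x + s • h‖ * ‖h‖) ^ 2 := sq_le_sq' (by
          linarith [neg_le_of_abs_le (abs_real_inner_le_norm (x + s • h) h)])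
          (real_inner_le_norm _ _)
      _ ≤ ‖h‖ ^ 2 * (‖x + s • h‖ ^ 2 + ε ^ 2) := by
          rw [mul_pow, mul_comm]
          gcongr
          exact le_add_of_nonneg_right (sq_nonneg ε)

lemma exists_supergradient_Phi_regNorm {p δ ε : ℝ} (hp : 1 < p) (hδ : 0 ≤ δ * (p - 2))
    (hε : ε ≠ 0) (x : E) (y : F) :
    ∃ (v : E) (w : F), ∀ h k, 0 ≤ δ * (‖h‖ ^ 2 - ‖k‖ ^ 2) →
      δ * Phi p (regNorm ε (x + h)) (regNorm ε (y + k)) ≤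
        δ * Phi p (regNorm ε x) (regNorm ε y) + (⟪v, h⟫ + ⟪w, k⟫) := by
  refine ⟨(δ * Phi₁ p (regNorm ε x) (regNorm ε y) / regNorm ε x) • x,
    (δ * Phi₂ p (regNorm ε x) (regNorm ε y) / regNorm ε y) • y, fun h k hhk ↦ ?_⟩
  have := (isNormPath_regNorm hε x h).mul_Phi_le_tangent (isNormPath_regNorm hε y k) hp hδ hhk 0 1
  simp only [one_smul, zero_smul, add_zero, sub_zero, mul_one] at this
  refine this.trans_eq ?_
  rw [real_inner_smul_left, real_inner_smul_left]
  ring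

end InnerProductSpace

section Probability

variable {Ω : Type*} {m0 : MeasurableSpace Ω} {μ : Measure Ω}

section FiniteRange

variable {β γ G Z : Type*} [TopologicalSpace β] [TopologicalSpace.MetrizableSpace β] {f : Ω → β}

lemma exists_simpleFunc_coe_eq {m : MeasurableSpace Ω} (hf : StronglyMeasurable[m] f)
    (hfin : (range f).Finite) : ∃ φ : @SimpleFunc Ω m β, ⇑φ = f :=
  ⟨@SimpleFunc.mk Ω m β f (fun x ↦ by
    borelize β
    exact hf.measurable (measurableSet_singleton x)) hfin, rfl⟩

lemma stronglyMeasurable_comp_of_finite_range {m : MeasurableSpace Ω} [TopologicalSpace γ]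
    (hf : StronglyMeasurable[m] f) (hfin : (range f).Finite) (g : β → γ) :
    StronglyMeasurable[m] fun ω ↦ g (f ω) := by
  obtain ⟨φ, rfl⟩ := exists_simpleFunc_coe_eq hf hfin
  exact (φ.map g).stronglyMeasurable

lemma integrable_comp_of_finite_range [NormedAddCommGroup G] [IsFiniteMeasure μ]
    (hf : StronglyMeasurable f) (hfin : (range f).Finite) (g : β → G) :
    Integrable (fun ω ↦ g (f ω)) μ := by
  obtain ⟨φ, rfl⟩ := exists_simpleFunc_coe_eq hf hfin
  exact (φ.map g).integrable_of_isFiniteMeasure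

lemma integral_comp_eq_sum_of_finite_range [NormedAddCommGroup G] [NormedSpace ℝ G]
    [CompleteSpace G] [IsFiniteMeasure μ] (hf : StronglyMeasurable f) (hfin : (range f).Finite)
    (g : β → G) :
    ∫ ω, g (f ω) ∂μ = ∑ z ∈ hfin.toFinset, μ.real (f ⁻¹' {z}) • g z := by
  classical
  obtain ⟨φ, rfl⟩ := exists_simpleFunc_coe_eq hf hfin
  have hsum : (fun ω ↦ g (φ ω)) =
      fun ω ↦ ∑ z ∈ hfin.toFinset, (φ ⁻¹' {z}).indicator (fun _ ↦ g z) ω := by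
    ext ω
    simp [indicator_apply]
  rw [hsum, integral_finsetSum _ fun z _ ↦
    (integrable_const _).indicator (φ.measurableSet_fiber z)]
  exact Finset.sum_congr rfl fun z _ ↦ integral_indicator_const _ (φ.measurableSet_fiber z)

lemma continuous_integral_comp_of_finite_range [TopologicalSpace Z] [IsFiniteMeasure μ]
    (hf : StronglyMeasurable f) (hfin : (range f).Finite) {ψ : Z → β → ℝ}
    (hψ : ∀ x, Continuous fun z ↦ ψ z x) : Continuous fun z ↦ ∫ ω, ψ z (f ω) ∂μ := by
  simp only [integral_comp_eq_sum_of_finite_range hf hfin]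
  exact continuous_finsetSum _ fun x _ ↦ continuous_const.mul (hψ x)

end FiniteRange

variable {E F : Type*} [NormedAddCommGroup E] [InnerProductSpace ℝ E] [CompleteSpace E]
  [NormedAddCommGroup F] [InnerProductSpace ℝ F] [CompleteSpace F]

lemma integral_inner_martingale_sub_eq_zero {ι : Type*} [Preorder ι] {ℱ : Filtration ι m0}
    [SigmaFiniteFiltration μ ℱ] {X : ι → Ω → E} (hX : Martingale X ℱ μ) {i j : ι} (hij : i ≤ j)
    {V : Ω → E} (hV : StronglyMeasurable[ℱ i] V)
    (hint : Integrable (fun ω ↦ ⟪V ω, X j ω - X i ω⟫) μ) :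
    ∫ ω, ⟪V ω, X j ω - X i ω⟫ ∂μ = 0 := by
  have hincr : μ[X j - X i | ℱ i] =ᵐ[μ] 0 := by
    filter_upwards [condExp_sub (hX.integrable j) (hX.integrable i) (ℱ i),
      hX.condExp_ae_eq hij, hX.condExp_ae_eq le_rfl] with ω hsub hj hi
    rw [hsub, Pi.sub_apply, hj, hi, sub_self, Pi.zero_apply]
  have hpull := condExp_bilin_of_stronglyMeasurable_left (innerSL ℝ : E →L[ℝ] E →L[ℝ] ℝ) hV
    (g := X j - X i) hint ((hX.integrable j).sub (hX.integrable i))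
  rw [← integral_condExp (ℱ.le i)]
  refine integral_eq_zero_of_ae ?_
  filter_upwards [hpull, hincr] with ω hω hω'
  exact hω.trans (by simp [hω'])

variable [IsFiniteMeasure μ] {X : ℕ → Ω → E} {Y : ℕ → Ω → F} {ℱ : Filtration ℕ m0}
  {ψ : E → F → ℝ} {r : E → F → Prop}

lemma integral_comp_succ_le_of_supergradient (hX : Martingale X ℱ μ) (hY : Martingale Y ℱ μ)
    (hXfin : ∀ t, (range (X t)).Finite) (hYfin : ∀ t, (range (Y t)).Finite)
    (hψ : ∀ x y, ∃ v w, ∀ h k, r h k → ψ (x + h) (y + k) ≤ ψ x y + (⟪v, h⟫ + ⟪w, k⟫)) {t : ℕ}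
    (hr : ∀ᵐ ω ∂μ, r (X (t + 1) ω - X t ω) (Y (t + 1) ω - Y t ω)) :
    ∫ ω, ψ (X (t + 1) ω) (Y (t + 1) ω) ∂μ ≤ ∫ ω, ψ (X t ω) (Y t ω) ∂μ := by
  choose v w hvw using hψ
  have hfin s : (range fun ω ↦ (X s ω, Y s ω)).Finite :=
    ((hXfin s).prod (hYfin s)).subset (range_pair_subset _ _)
  have hmeas s : StronglyMeasurable[ℱ s] fun ω ↦ (X s ω, Y s ω) :=
    (hX.stronglyMeasurable s).prodMk (hY.stronglyMeasurable s)
  have hint (g : (E × F) × (E × F) → ℝ) :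
      Integrable (fun ω ↦ g ((X t ω, Y t ω), (X (t + 1) ω, Y (t + 1) ω))) μ :=
    integrable_comp_of_finite_range
      (((hmeas t).mono (ℱ.le t)).prodMk ((hmeas (t + 1)).mono (ℱ.le (t + 1))))
      (((hfin t).prod (hfin (t + 1))).subset (range_pair_subset _ _)) g
  set Δψ : Ω → ℝ := fun ω ↦ ⟪v (X t ω) (Y t ω), X (t + 1) ω - X t ω⟫ +
    ⟪w (X t ω) (Y t ω), Y (t + 1) ω - Y t ω⟫
  have hψt : Integrable (fun ω ↦ ψ (X t ω) (Y t ω)) μ := hint fun z ↦ ψ z.1.1 z.1.2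
  have hv := hint fun z ↦ ⟪v z.1.1 z.1.2, z.2.1 - z.1.1⟫
  have hw := hint fun z ↦ ⟪w z.1.1 z.1.2, z.2.2 - z.1.2⟫
  have hΔψ : Integrable Δψ μ := hv.add hw
  have hv0 := integral_inner_martingale_sub_eq_zero hX t.le_succ
    (stronglyMeasurable_comp_of_finite_range (hmeas t) (hfin t) fun z ↦ v z.1 z.2) hv
  have hw0 := integral_inner_martingale_sub_eq_zero hY t.le_succ
    (stronglyMeasurable_comp_of_finite_range (hmeas t) (hfin t) fun z ↦ w z.1 z.2) hw
  have hΔψ0 : ∫ ω, Δψ ω ∂μ = 0 := (integral_add hv hw).trans (by rw [hv0, hw0, add_zero])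
  calc ∫ ω, ψ (X (t + 1) ω) (Y (t + 1) ω) ∂μ
      ≤ ∫ ω, (ψ (X t ω) (Y t ω) + Δψ ω) ∂μ := by
        refine integral_mono_ae (hint fun z ↦ ψ z.2.1 z.2.2) (hψt.add hΔψ) ?_
        filter_upwards [hr] with ω hω
        simpa using hvw (X t ω) (Y t ω) _ _ hω
    _ = ∫ ω, ψ (X t ω) (Y t ω) ∂μ := by rw [integral_add hψt hΔψ, hΔψ0, add_zero]

lemma antitone_integral_comp_of_supergradient (hX : Martingale X ℱ μ) (hY : Martingale Y ℱ μ)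
    (hXfin : ∀ t, (range (X t)).Finite) (hYfin : ∀ t, (range (Y t)).Finite)
    (hψ : ∀ x y, ∃ v w, ∀ h k, r h k → ψ (x + h) (y + k) ≤ ψ x y + (⟪v, h⟫ + ⟪w, k⟫))
    (hr : ∀ t, ∀ᵐ ω ∂μ, r (X (t + 1) ω - X t ω) (Y (t + 1) ω - Y t ω)) :
    Antitone fun t ↦ ∫ ω, ψ (X t ω) (Y t ω) ∂μ :=
  antitone_nat_of_succ_le fun t ↦
    integral_comp_succ_le_of_supergradient hX hY hXfin hYfin hψ (hr t)

lemma integral_mul_V_le_integral_mul_Phi {p δ : ℝ} (hp : 1 < p) (hδ : 0 ≤ δ * (p - 2))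
    (hX : Martingale X ℱ μ) (hY : Martingale Y ℱ μ)
    (hXfin : ∀ t, (range (X t)).Finite) (hYfin : ∀ t, (range (Y t)).Finite)
    (hXY : ∀ t, ∀ᵐ ω ∂μ, 0 ≤ δ * (‖X (t + 1) ω - X t ω‖ ^ 2 - ‖Y (t + 1) ω - Y t ω‖ ^ 2))
    (T : ℕ) :
    ∫ ω, δ * V p ‖X T ω‖ ‖Y T ω‖ ∂μ ≤ ∫ ω, δ * Phi p ‖X 0 ω‖ ‖Y 0 ω‖ ∂μ := by
  have hfin t : (range fun ω ↦ (X t ω, Y t ω)).Finite :=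
    ((hXfin t).prod (hYfin t)).subset (range_pair_subset _ _)
  have hmeas t : StronglyMeasurable fun ω ↦ (X t ω, Y t ω) :=
    ((hX.stronglyMeasurable t).mono (ℱ.le t)).prodMk ((hY.stronglyMeasurable t).mono (ℱ.le t))
  set J : ℕ → ℝ → ℝ := fun t ε ↦ ∫ ω, δ * Phi p (regNorm ε (X t ω)) (regNorm ε (Y t ω)) ∂μ
  have hJcont t : Continuous (J t) := continuous_integral_comp_of_finite_range (hmeas t) (hfin t)
    (ψ := fun ε z ↦ δ * Phi p (regNorm ε z.1) (regNorm ε z.2)) fun z ↦ continuous_const.mul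
      (continuous_Phi_comp hp.le (continuous_regNorm z.1) (continuous_regNorm z.2)
        fun ε ↦ regNorm_nonneg ε z.1)
  have hJ : ∀ ε ≠ 0, J T ε ≤ J 0 ε := fun ε hε ↦
    antitone_integral_comp_of_supergradient hX hY hXfin hYfin
      (ψ := fun x y ↦ δ * Phi p (regNorm ε x) (regNorm ε y))
      (exists_supergradient_Phi_regNorm hp hδ hε) hXY T.zero_le
  have hJ0 : J T 0 ≤ J 0 0 :=
    le_of_tendsto_of_tendsto (((hJcont T).tendsto 0).mono_left nhdsWithin_le_nhds)
      (((hJcont 0).tendsto 0).mono_left nhdsWithin_le_nhds)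
      (eventually_mem_nhdsWithin.mono hJ : ∀ᶠ ε in 𝓝[≠] 0, J T ε ≤ J 0 ε)
  simp only [J, regNorm_zero] at hJ0
  exact (integral_mono
    (integrable_comp_of_finite_range (hmeas T) (hfin T) fun z ↦ δ * V p ‖z.1‖ ‖z.2‖)
    (integrable_comp_of_finite_range (hmeas T) (hfin T) fun z ↦ δ * Phi p ‖z.1‖ ‖z.2‖)
    fun ω ↦ mul_V_le_mul_Phi hp hδ (norm_nonneg _)).trans hJ0

end Probability

section SharpConstant

/-- The exponent `p* = max(p, p/(p-1))`, the larger of `p` and its conjugate exponent. -/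
noncomputable def pStar (p : ℝ) : ℝ := max p (p / (p - 1))

/-- Burkholder's bound `u(x₁, x₂)`, as a function of the norms `a = |x₁|` and `b = |x₂|`. -/
noncomputable def burkholderBound (p a b : ℝ) : ℝ :=
  if (p ≤ 2 ∧ b ≤ (pStar p - 1) * a) ∨ (2 ≤ p ∧ (pStar p - 1) * a < b)
  then p * (1 - 1 / pStar p) ^ (p - 1) * (b - (pStar p - 1) * a) * (a + b) ^ (p - 1)
  else b ^ p - (pStar p - 1) ^ p * a ^ p

variable {p a b : ℝ}

lemma pStar_of_two_le (hp : 2 ≤ p) : pStar p = p :=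
  max_eq_left (by rw [div_le_iff₀ (by linarith)]; nlinarith)

lemma pStar_of_le_two (hp : 1 < p) (hp2 : p ≤ 2) : pStar p = p / (p - 1) :=
  max_eq_right (by rw [le_div_iff₀ (by linarith)]; nlinarith)

lemma pStar_sub_one_of_le_two (hp : 1 < p) (hp2 : p ≤ 2) : pStar p - 1 = (p - 1)⁻¹ := by
  have : p - 1 ≠ 0 := by linarith
  rw [pStar_of_le_two hp hp2]
  field_simp
  ring

lemma one_le_pStar_sub_one (hp : 1 < p) : 1 ≤ pStar p - 1 := by
  rcases le_total 2 p with hp2 | hp2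
  · rw [pStar_of_two_le hp2]
    linarith
  · rw [pStar_sub_one_of_le_two hp hp2]
    exact (one_le_inv₀ (by linarith)).2 (by linarith)

lemma burkholderBound_of_two_le (hp : 2 ≤ p) (ha : 0 ≤ a) : burkholderBound p a b = Phi p a b := by
  have hp1 : 1 ≤ p := by linarith
  rw [burkholderBound, pStar_of_two_le hp, Phi]
  rcases lt_trichotomy ((p - 1) * a) b with hab | hab | hab
  · rw [if_pos (Or.inr ⟨hp, hab⟩), if_pos hab.le, U, alpha]
  · have hV := V_eq_zero_of_cone hp1 ha hab
    rw [if_pos hab.le, U_eq_zero_of_cone hab]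
    split_ifs
    · simp [hab]
    · exact hV
  · rw [if_neg hab.not_ge]
    split_ifs with h
    · obtain rfl : p = 2 := hp.antisymm' (h.resolve_right fun h ↦ hab.not_gt h.2).1
      norm_num [V]
      ring
    · rfl

lemma burkholderBound_of_lt_two (hp : 1 < p) (hp2 : p < 2) :
    burkholderBound p a b = -((p - 1) ^ p)⁻¹ * Phi p b a := by
  have hp1 : 0 < p - 1 := sub_pos.2 hp
  have hcone : b ≤ (p - 1)⁻¹ * a ↔ (p - 1) * b ≤ a := le_inv_mul_iff₀ hp1
  rw [burkholderBound, Phi, pStar_sub_one_of_le_two hp hp2.le, pStar_of_le_two hp hp2.le]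
  split_ifs with h hab hab
  · have hbase : 1 - 1 / (p / (p - 1)) = (p - 1)⁻¹ * (1 - 1 / p) := by field_simp; ring
    have hbase' : 0 ≤ 1 - 1 / p := sub_nonneg.2 (by rw [div_le_one (by linarith)]; exact hp.le)
    rw [hbase, Real.mul_rpow (by positivity) hbase', Real.inv_rpow hp1.le, U, alpha,
      rpow_eq_rpow_sub_one_mul hp1 p, add_comm b a]
    have := Real.rpow_pos_of_pos hp1 (p - 1)
    field_simp
    ring
  · exact absurd (hcone.1 (h.resolve_right fun h ↦ hp2.not_ge h.1).2) hab
  · exact absurd (Or.inl ⟨hp2.le, hcone.2 hab⟩) h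
  · have := Real.rpow_pos_of_pos hp1 p
    rw [V, Real.inv_rpow hp1.le]
    field_simp
    ring

lemma burkholderBound_nonpos (hp : 1 < p) (hb : 0 ≤ b) (hab : b ≤ a) :
    burkholderBound p a b ≤ 0 := by
  have hc := one_le_pStar_sub_one hp
  have ha : 0 ≤ a := hb.trans hab
  have hbc : b ≤ (pStar p - 1) * a := hab.trans (le_mul_of_one_le_left ha hc)
  have hbase : 0 ≤ 1 - 1 / pStar p :=
    sub_nonneg.2 (by rw [div_le_one (by linarith)]; linarith)
  unfold burkholderBound
  split_ifs
  · exact mul_nonpos_of_nonpos_of_nonneg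
      (mul_nonpos_of_nonneg_of_nonpos (by positivity) (sub_nonpos.2 hbc)) (by positivity)
  · rw [← Real.mul_rpow (by linarith) ha, sub_nonpos]
    exact Real.rpow_le_rpow hb hbc (by linarith)

lemma rpow_one_div_le_mul_rpow_one_div {A B c : ℝ} (hp : 0 < p) (hA : 0 ≤ A) (hB : 0 ≤ B)
    (hc : 0 ≤ c) (h : A ≤ c ^ p * B) : A ^ (1 / p) ≤ c * B ^ (1 / p) :=
  calc A ^ (1 / p) ≤ (c ^ p * B) ^ (1 / p) := Real.rpow_le_rpow hA h (by positivity)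
    _ = c * B ^ (1 / p) := by
      rw [Real.mul_rpow (by positivity) hB, one_div, Real.rpow_rpow_inv hc hp.ne']

end SharpConstant

section SimpleMartingale

variable {E F Ω : Type*} [NormedAddCommGroup E] [InnerProductSpace ℝ E] [CompleteSpace E]
  [NormedAddCommGroup F] [InnerProductSpace ℝ F] [CompleteSpace F] {m0 : MeasurableSpace Ω}
  {μ : Measure Ω} [IsFiniteMeasure μ] {ℱ : Filtration ℕ m0} {X : ℕ → Ω → E} {Y : ℕ → Ω → F} {p : ℝ}

lemma integral_sub_le_integral_burkholderBound (hp : 1 < p)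
    (hX : Martingale X ℱ μ) (hY : Martingale Y ℱ μ)
    (hXfin : ∀ t, (range (X t)).Finite) (hYfin : ∀ t, (range (Y t)).Finite)
    (hsub : ∀ t, ∀ᵐ ω ∂μ, ‖Y (t + 1) ω - Y t ω‖ ≤ ‖X (t + 1) ω - X t ω‖) (T : ℕ) :
    ∫ ω, (‖Y T ω‖ ^ p - (pStar p - 1) ^ p * ‖X T ω‖ ^ p) ∂μ ≤
      ∫ ω, burkholderBound p ‖X 0 ω‖ ‖Y 0 ω‖ ∂μ := by
  have hsq t : ∀ᵐ ω ∂μ, ‖Y (t + 1) ω - Y t ω‖ ^ 2 ≤ ‖X (t + 1) ω - X t ω‖ ^ 2 := by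
    filter_upwards [hsub t] with ω hω
    gcongr
  rcases le_or_gt 2 p with hp2 | hp2
  · have h := integral_mul_V_le_integral_mul_Phi (δ := 1) hp (by linarith) hX hY hXfin hYfin
      (fun t ↦ (hsq t).mono fun ω hω ↦ by linarith) T
    simpa only [one_mul, V, pStar_of_two_le hp2, burkholderBound_of_two_le hp2 (norm_nonneg _)]
      using h
  · have hp1 : 0 < (p - 1) ^ p := Real.rpow_pos_of_pos (sub_pos.2 hp) p
    have hδ : -((p - 1) ^ p)⁻¹ ≤ 0 := neg_nonpos.2 (by positivity)
    have h := integral_mul_V_le_integral_mul_Phi hp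
      (mul_nonneg_of_nonpos_of_nonpos hδ (by linarith)) hY hX hYfin hXfin
      (fun t ↦ (hsq t).mono fun ω hω ↦ mul_nonneg_of_nonpos_of_nonpos hδ (sub_nonpos.2 hω)) T
    have hV (a b : ℝ) : -((p - 1) ^ p)⁻¹ * V p b a = b ^ p - (pStar p - 1) ^ p * a ^ p := by
      rw [V, pStar_sub_one_of_le_two hp hp2.le, Real.inv_rpow (by linarith)]
      field_simp
      ring
    simpa only [hV, burkholderBound_of_lt_two hp hp2] using h

end SimpleMartingale

end Burkholder

open Burkholder in
theorem burkholder_subordinate_inequality_general {E F Ω : Type*}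
    [NormedAddCommGroup E] [InnerProductSpace ℝ E] [CompleteSpace E]
    [NormedAddCommGroup F] [InnerProductSpace ℝ F] [CompleteSpace F]
    {m0 : MeasurableSpace Ω} {μ : Measure Ω} [IsFiniteMeasure μ] {ℱ : Filtration ℕ m0}
    {X : ℕ → Ω → E} {Y : ℕ → Ω → F} {p : ℝ} (hp : 1 < p)
    (hX : Martingale X ℱ μ) (hY : Martingale Y ℱ μ)
    (hXfin : ∀ t, (Set.range (X t)).Finite) (hYfin : ∀ t, (Set.range (Y t)).Finite)
    (hsub : ∀ t, ∀ᵐ ω ∂μ, ‖Y (t + 1) ω - Y t ω‖ ≤ ‖X (t + 1) ω - X t ω‖) (T : ℕ) :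
    ∫ ω, (‖Y T ω‖ ^ p - (pStar p - 1) ^ p * ‖X T ω‖ ^ p) ∂μ ≤
        ∫ ω, burkholderBound p ‖X 0 ω‖ ‖Y 0 ω‖ ∂μ ∧
      ((∀ᵐ ω ∂μ, ‖Y 0 ω‖ ≤ ‖X 0 ω‖) →
        (∫ ω, ‖Y T ω‖ ^ p ∂μ) ^ (1 / p) ≤
          (pStar p - 1) * (∫ ω, ‖X T ω‖ ^ p ∂μ) ^ (1 / p)) := by
  have hbound := integral_sub_le_integral_burkholderBound hp hX hY hXfin hYfin hsub T
  refine ⟨hbound, fun h0 ↦ ?_⟩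
  have hle : ∫ ω, (‖Y T ω‖ ^ p - (pStar p - 1) ^ p * ‖X T ω‖ ^ p) ∂μ ≤ 0 :=
    hbound.trans (integral_nonpos_of_ae (h0.mono fun ω ↦ burkholderBound_nonpos hp (norm_nonneg _)))
  have hXint : Integrable (fun ω ↦ ‖X T ω‖ ^ p) μ := integrable_comp_of_finite_range
    ((hX.stronglyMeasurable T).mono (ℱ.le T)) (hXfin T) fun x ↦ ‖x‖ ^ p
  have hYint : Integrable (fun ω ↦ ‖Y T ω‖ ^ p) μ := integrable_comp_of_finite_range
    ((hY.stronglyMeasurable T).mono (ℱ.le T)) (hYfin T) fun y ↦ ‖y‖ ^ p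
  rw [integral_sub hYint (hXint.const_mul _), integral_const_mul, sub_nonpos] at hle
  exact rpow_one_div_le_mul_rpow_one_div (by linarith) (integral_nonneg fun ω ↦ by positivity)
    (integral_nonneg fun ω ↦ by positivity) (by linarith [one_le_pStar_sub_one hp]) hle

/-- Burkholder's inequality for differentially subordinate simple
martingales: with `p* = max(p, p/(p-1))`, if `M²` is differentially subordinate to `M¹`
and `(M¹₀, M²₀) = (x₁, x₂)`, then `E[|M²_T|^p - (p*-1)^p |M¹_T|^p] ≤ u(x₁,x₂)`, where
`u(x₁,x₂) = p(1-1/p*)^{p-1}(|x₂| - (p*-1)|x₁|)(|x₁|+|x₂|)^{p-1}` if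
(`p ≤ 2` and `|x₂| ≤ (p*-1)|x₁|`) or (`2 ≤ p` and `|x₂| > (p*-1)|x₁|`), and
`u(x₁,x₂) = |x₂|^p - (p*-1)^p|x₁|^p` otherwise; in particular, for `x₁ = x₂`,
`‖M²_T‖_{L^p} ≤ (p*-1)‖M¹_T‖_{L^p}`. -/
theorem burkholder_subordinate_inequality {H : Type*} [NormedAddCommGroup H]
    [InnerProductSpace ℝ H] [CompleteSpace H] (p : ℝ) (hp : 1 < p)
    {Ω : Type*} {m0 : MeasurableSpace Ω} (μ : Measure Ω) [IsProbabilityMeasure μ]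
    (ℱ : Filtration ℕ m0) (M1 M2 : ℕ → Ω → H)
    (hM1 : Martingale M1 ℱ μ) (hM2 : Martingale M2 ℱ μ)
    (hs1 : (Set.range fun q : ℕ × Ω => M1 q.1 q.2).Finite)
    (hs2 : (Set.range fun q : ℕ × Ω => M2 q.1 q.2).Finite)
    (x₁ x₂ : H) (hM10 : ∀ ω, M1 0 ω = x₁) (hM20 : ∀ ω, M2 0 ω = x₂)
    (hsub : ∀ t : ℕ, ∀ᵐ ω ∂μ, ‖M2 (t + 1) ω - M2 t ω‖ ≤ ‖M1 (t + 1) ω - M1 t ω‖)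
    (T : ℕ) :
    (∫ ω, (‖M2 T ω‖ ^ p - (max p (p / (p - 1)) - 1) ^ p * ‖M1 T ω‖ ^ p) ∂μ)
      ≤ (if (p ≤ 2 ∧ ‖x₂‖ ≤ (max p (p / (p - 1)) - 1) * ‖x₁‖)
            ∨ (2 ≤ p ∧ (max p (p / (p - 1)) - 1) * ‖x₁‖ < ‖x₂‖)
         then p * (1 - 1 / max p (p / (p - 1))) ^ (p - 1) *
              (‖x₂‖ - (max p (p / (p - 1)) - 1) * ‖x₁‖) * (‖x₁‖ + ‖x₂‖) ^ (p - 1)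
         else ‖x₂‖ ^ p - (max p (p / (p - 1)) - 1) ^ p * ‖x₁‖ ^ p) ∧
    (x₁ = x₂ →
      (∫ ω, ‖M2 T ω‖ ^ p ∂μ) ^ (1 / p)
        ≤ (max p (p / (p - 1)) - 1) * (∫ ω, ‖M1 T ω‖ ^ p ∂μ) ^ (1 / p)) := by
  have hfin {M : ℕ → Ω → H} (hs : (Set.range fun q : ℕ × Ω ↦ M q.1 q.2).Finite) (t : ℕ) :
      (Set.range (M t)).Finite :=
    hs.subset (Set.range_comp_subset_range (Prod.mk t) fun q : ℕ × Ω ↦ M q.1 q.2)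
  obtain ⟨hbound, hLp⟩ :=
    burkholder_subordinate_inequality_general hp hM1 hM2 (hfin hs1) (hfin hs2) hsub T
  simp only [hM10, hM20, integral_const, probReal_univ, one_smul] at hbound
  exact ⟨hbound, fun hx ↦ hLp (by simp [hM10, hM20, hx])⟩
end

section
/- Let k, n, T ∈ ℕ, X = ℝⁿ and x₀ ∈ X. Let μ be a probability measure on X^{T+1} under which the coordinate process M₀,…,M_T is a martingale with respect to its natural filtration and M₀ = x₀ a.s. Let A ⊆ X^{T+1} be a Borel set with μ(A) = 1, and let f : X^{T+1} → ℝᵏ be Borel measurable with ∫|f| dμ < ∞. Then there exists a probability measure ν on X^{T+1} under which the coordinate process is a martingale in its natural filtration starting at x₀, such that ν is supported on a finite set S ⊆ A with card S ≤ (n+k+1)^T, and ∫ f dν = ∫ f dμ. -/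
open MeasureTheory

/-!
Disintegrate `μ` along the last step of the path and induct on the number of steps. Given the past
`p`, the last step has law `κ p` with barycentre `p (Fin.last T)`, and the one-step Tchakaloff
theorem, applied to `x ↦ (x, f (p, x))`, replaces `κ p` by a law on at most `n + k + 1` points with
the same barycentre, so the martingale property survives, and the same conditional expectation of
`f`. Only finitely many pasts have to be treated once the induction hypothesis has replaced the law
of the past by a finitely supported one; no measurable selection is needed, and since that support
may be placed in any set of full measure, exceptional null sets of pasts are avoided.

The one-step theorem is Carathéodory's theorem together with the fact that the integral of a
function against a probability measure lies in every convex set containing almost all of its values.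
In finite dimensions the set need not be closed: if the integral were outside, a supporting
hyperplane would carry the function almost everywhere, which lowers the dimension.
-/

open ProbabilityTheory

section ConvexIntegral

variable {V : Type*} [NormedAddCommGroup V] [NormedSpace ℝ V] [FiniteDimensional ℝ V]

lemma exists_ne_zero_forall_eq_of_affineSpan_ne_top {C : Set V} (hC : affineSpan ℝ C ≠ ⊤)
    {c₀ : V} (hc₀ : c₀ ∈ C) : ∃ l : StrongDual ℝ V, l ≠ 0 ∧ ∀ c ∈ C, l c = l c₀ := by
  have hdir : (affineSpan ℝ C).direction < ⊤ := lt_top_iff_ne_top.2 fun h ↦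
    hC ((AffineSubspace.direction_eq_top_iff_of_nonempty ⟨c₀, subset_affineSpan ℝ C hc₀⟩).1 h)
  obtain ⟨l, hl_ne, hl⟩ := Submodule.exists_le_ker_of_lt_top _ hdir
  refine ⟨LinearMap.toContinuousLinearMap l, by simpa using hl_ne, fun c hc ↦ ?_⟩
  have : l (c - c₀) = 0 := hl (AffineSubspace.vsub_mem_direction
    (subset_affineSpan ℝ C hc) (subset_affineSpan ℝ C hc₀))
  simpa [sub_eq_zero] using this

lemma exists_ne_zero_forall_le_of_notMem {C : Set V} (hC : Convex ℝ C) (hne : C.Nonempty)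
    {x : V} (hx : x ∉ C) : ∃ l : StrongDual ℝ V, l ≠ 0 ∧ ∀ c ∈ C, l c ≤ l x := by
  by_cases hint : (interior C).Nonempty
  · exact geometric_hahn_banach_of_nonempty_interior_point hC (fun h ↦ hx (interior_subset h)) hint
  · obtain ⟨c₀, hc₀⟩ := hne
    obtain ⟨l, hl_ne, hl⟩ := exists_ne_zero_forall_eq_of_affineSpan_ne_top
      (hC.interior_nonempty_iff_affineSpan_eq_top.not.1 hint) hc₀
    rcases le_total (l c₀) (l x) with h | h
    · exact ⟨l, hl_ne, fun c hc ↦ (hl c hc).trans_le h⟩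
    · exact ⟨-l, neg_ne_zero.2 hl_ne, fun c hc ↦ by simpa [hl c hc] using h⟩

variable {Ω : Type*} [MeasurableSpace Ω] {μ : Measure Ω} [IsProbabilityMeasure μ]

theorem integral_mem_of_convex {C : Set V} (hC : Convex ℝ C) {g : Ω → V} (hg : Integrable g μ)
    (hgC : ∀ᵐ ω ∂μ, g ω ∈ C) : ∫ ω, g ω ∂μ ∈ C := by
  induction hd : Module.finrank ℝ V using Nat.strong_induction_on generalizing V with
  | _ d ih =>
  subst hd
  set m := ∫ ω, g ω ∂μ with hm
  by_contra hmC
  have hC_ne : C.Nonempty := hgC.exists.imp' g fun _ h ↦ h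
  obtain ⟨l, hl_ne, hl⟩ := exists_ne_zero_forall_le_of_notMem hC hC_ne hmC
  have hgm : Integrable (fun ω ↦ g ω - m) μ := hg.sub (integrable_const m)
  have hgm_zero : ∫ ω, (g ω - m) ∂μ = 0 := by
    simp [integral_sub hg (integrable_const m), ← hm]
  have hker : ∀ᵐ ω ∂μ, g ω - m ∈ l.ker := by
    have hint : ∫ ω, -l (g ω - m) ∂μ = 0 := by
      rw [integral_neg, l.integral_comp_comm hgm, hgm_zero, map_zero, neg_zero]
    have hnonneg : 0 ≤ᵐ[μ] fun ω ↦ -l (g ω - m) := by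
      filter_upwards [hgC] with ω hω
      simpa using hl _ hω
    filter_upwards [(integral_eq_zero_iff_of_nonneg_ae hnonneg (l.integrable_comp hgm).neg).1 hint]
      with ω hω using neg_eq_zero.1 hω
  have hker_lt : Module.finrank ℝ l.ker < Module.finrank ℝ V :=
    Submodule.finrank_lt fun h ↦ hl_ne <|
      ContinuousLinearMap.coe_injective (LinearMap.ker_eq_top.1 h)
  obtain ⟨proj, hproj⟩ := Submodule.ClosedComplemented.of_finiteDimensional l.ker
  have hmem : ∀ᵐ ω ∂μ, proj (g ω - m) ∈ {v : l.ker | m + v ∈ C} := by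
    filter_upwards [hgC, hker] with ω hω hω_ker
    simpa [hproj ⟨_, hω_ker⟩] using hω
  have hconv : Convex ℝ {v : l.ker | m + v ∈ C} :=
    (hC.translate_preimage_right m).linear_preimage l.ker.subtype
  have := ih _ hker_lt hconv (proj.integrable_comp hgm) hmem rfl
  rw [proj.integral_comp_comm hgm, hgm_zero, map_zero] at this
  exact hmC (by simpa using this)

end ConvexIntegral

section FiniteSupport

/-- The measure `ν` is carried by at most `N` points, all of them in `A`. -/
def HasFiniteSupport {Ω : Type*} [MeasurableSpace Ω] (ν : Measure Ω) (A : Set Ω) (N : ℕ) : Prop :=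
  ∃ S : Finset Ω, ↑S ⊆ A ∧ S.card ≤ N ∧ ∀ᵐ ω ∂ν, ω ∈ (S : Set Ω)

variable {α β Ω : Type*} [MeasurableSpace α] [MeasurableSpace β] [MeasurableSpace Ω]
  {A : Set Ω} {N : ℕ}

namespace HasFiniteSupport

lemma ae_mem {ν : Measure Ω} (hν : HasFiniteSupport ν A N) : ∀ᵐ ω ∂ν, ω ∈ A := by
  obtain ⟨S, hSA, -, hS⟩ := hν
  filter_upwards [hS] with ω hω using hSA hω

lemma mono {ν : Measure Ω} {B : Set Ω} (hν : HasFiniteSupport ν A N) (hAB : A ⊆ B) :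
    HasFiniteSupport ν B N :=
  let ⟨S, hSA, hS⟩ := hν
  ⟨S, hSA.trans hAB, hS⟩

lemma integrable [MeasurableSingletonClass Ω] {E : Type*} [NormedAddCommGroup E]
    {ν : Measure Ω} [IsFiniteMeasure ν] (hν : HasFiniteSupport ν A N) (f : Ω → E) :
    Integrable f ν := by
  obtain ⟨S, -, -, hS⟩ := hν
  rw [← Measure.restrict_eq_self_of_ae_mem hS]
  exact IntegrableOn.finset

lemma map [MeasurableSingletonClass β] {φ : Ω → β} (hφ : Measurable φ) {ν : Measure Ω} {B : Set β}
    (hν : HasFiniteSupport ν (φ ⁻¹' B) N) : HasFiniteSupport (ν.map φ) B N := by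
  classical
  obtain ⟨S, hSB, hcard, hS⟩ := hν
  refine ⟨S.image φ, by simpa using hSB, Finset.card_image_le.trans hcard, ?_⟩
  refine (ae_map_iff hφ.aemeasurable (S.image φ).measurableSet).2 ?_
  filter_upwards [hS] with ω hω using Finset.mem_image_of_mem φ hω

lemma compProd [MeasurableSingletonClass α] [MeasurableSingletonClass β]
    {ν : Measure α} [SFinite ν] {κ : Kernel α β} [IsSFiniteKernel κ] {G : Set α} {B : Set (α × β)}
    {M : ℕ} (hν : HasFiniteSupport ν G N)
    (hκ : ∀ᵐ a ∂ν, HasFiniteSupport (κ a) {b | (a, b) ∈ B} M) :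
    HasFiniteSupport (ν ⊗ₘ κ) B (N * M) := by
  classical
  obtain ⟨S, -, hcard, hS⟩ := hν
  choose! R hRB hR_card hR using fun a (ha : HasFiniteSupport (κ a) {b | (a, b) ∈ B} M) ↦ ha
  let S' := {a ∈ S | HasFiniteSupport (κ a) {b | (a, b) ∈ B} M}
  let Q := S'.biUnion fun a ↦ (R a).image (Prod.mk a)
  have hQ : ∀ᵐ q ∂(ν ⊗ₘ κ), q ∈ (Q : Set (α × β)) := by
    refine Measure.ae_compProd_of_ae_ae Q.measurableSet ?_
    filter_upwards [hκ, hS] with a ha haS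
    filter_upwards [hR a ha] with b hb
    simp [Q, S', Finset.mem_coe.1 haS, Finset.mem_coe.1 hb, ha]
  refine ⟨Q, fun q hq ↦ ?_, ?_, hQ⟩
  · simp only [Q, S', Finset.mem_coe, Finset.mem_biUnion, Finset.mem_filter, Finset.mem_image] at hq
    obtain ⟨a, ⟨-, ha⟩, b, hb, rfl⟩ := hq
    exact hRB a ha hb
  · calc Q.card ≤ S'.card * M := Finset.card_biUnion_le_card_mul _ _ _ fun a ha ↦
          Finset.card_image_le.trans (hR_card a (Finset.mem_filter.1 ha).2)
      _ ≤ N * M := by gcongr; exact (Finset.card_filter_le _ _).trans hcard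

lemma exists_kernel_of_forall_exists [MeasurableSingletonClass α] [Nonempty β] {ν : Measure α}
    {G : Set α} (hν : HasFiniteSupport ν G N) {p : α → Measure β → Prop}
    (h : ∀ a ∈ G, ∃ ρ, IsProbabilityMeasure ρ ∧ p a ρ) :
    ∃ κ : Kernel α β, IsMarkovKernel κ ∧ ∀ᵐ a ∂ν, p a (κ a) := by
  classical
  obtain ⟨S, hSG, -, hS⟩ := hν
  choose! ρ hρ_prob hρ using h
  let ρ₀ : Measure β := Measure.dirac (Classical.arbitrary β)
  let η : α → Measure β := (S : Set α).piecewise ρ fun _ ↦ ρ₀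
  have hη : Measurable η := (measurable_const (a := ρ₀)).measurable_of_countable_ne <|
    S.countable_toSet.mono fun a ha ↦ by
      by_contra haS
      exact ha (Set.piecewise_eq_of_notMem (S : Set α) ρ (fun _ ↦ ρ₀) haS).symm
  refine ⟨⟨η, hη⟩, ⟨fun a ↦ ?_⟩, ?_⟩
  · by_cases ha : a ∈ (S : Set α)
    · simpa [η, Finset.mem_coe.1 ha] using hρ_prob a (hSG ha)
    · simpa [η, Finset.mem_coe.not.1 ha] using (inferInstance : IsProbabilityMeasure ρ₀)
  · filter_upwards [hS] with a ha
    simpa [η, Finset.mem_coe.1 ha] using hρ a (hSG ha)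

end HasFiniteSupport

section Tchakaloff

variable [MeasurableSingletonClass Ω]
  {V : Type*} [NormedAddCommGroup V] [NormedSpace ℝ V] [FiniteDimensional ℝ V]

lemma exists_hasFiniteSupport_integral_eq_of_mem_convexHull {g : Ω → V} {v : V}
    (hv : v ∈ convexHull ℝ (g '' A)) :
    ∃ ρ : Measure Ω, IsProbabilityMeasure ρ ∧
      HasFiniteSupport ρ A (Module.finrank ℝ V + 1) ∧ ∫ ω, g ω ∂ρ = v := by
  classical
  obtain ⟨ι, _, z, w, hz, hz_indep, hw, hw_sum, hwz⟩ := eq_pos_convex_span_of_mem_convexHull hv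
  choose a haA haz using fun i ↦ hz (Set.mem_range_self i)
  refine ⟨∑ i, ENNReal.ofReal (w i) • Measure.dirac (a i), ⟨?_⟩,
    ⟨Finset.univ.image a, by simpa [Set.range_subset_iff] using haA, ?_, by simp [ae_iff]⟩, ?_⟩
  · simp [← ENNReal.ofReal_sum_of_nonneg fun i _ ↦ (hw i).le, hw_sum]
  · calc (Finset.univ.image a).card ≤ Fintype.card ι := Finset.card_image_le
      _ ≤ Module.finrank ℝ (vectorSpan ℝ (Set.range z)) + 1 := hz_indep.card_le_finrank_succ
      _ ≤ Module.finrank ℝ V + 1 := by gcongr; exact Submodule.finrank_le _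
  · rw [integral_finsetSum_measure fun i _ ↦ (integrable_dirac (by simp)).smul_measure (by simp),
      ← hwz]
    exact Finset.sum_congr rfl fun i _ ↦ by
      rw [integral_smul_measure, integral_dirac, haz, ENNReal.toReal_ofReal (hw i).le]

theorem tchakaloff {μ : Measure Ω} [IsProbabilityMeasure μ] (hA : ∀ᵐ ω ∂μ, ω ∈ A) {g : Ω → V}
    (hg : Integrable g μ) :
    ∃ ρ : Measure Ω, IsProbabilityMeasure ρ ∧
      HasFiniteSupport ρ A (Module.finrank ℝ V + 1) ∧ ∫ ω, g ω ∂ρ = ∫ ω, g ω ∂μ :=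
  exists_hasFiniteSupport_integral_eq_of_mem_convexHull <|
    integral_mem_of_convex (convex_convexHull ℝ _) hg <|
      hA.mono fun ω hω ↦ subset_convexHull ℝ _ ⟨ω, hω, rfl⟩

lemma tchakaloff_pair {W : Type*} [NormedAddCommGroup W] [NormedSpace ℝ W] [FiniteDimensional ℝ W]
    {μ : Measure Ω} [IsProbabilityMeasure μ] (hA : ∀ᵐ ω ∂μ, ω ∈ A) {g : Ω → V} {h : Ω → W}
    (hg : Integrable g μ) (hh : Integrable h μ) :
    ∃ ρ : Measure Ω, IsProbabilityMeasure ρ ∧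
      HasFiniteSupport ρ A (Module.finrank ℝ V + Module.finrank ℝ W + 1) ∧
      ∫ ω, g ω ∂ρ = ∫ ω, g ω ∂μ ∧ ∫ ω, h ω ∂ρ = ∫ ω, h ω ∂μ := by
  obtain ⟨ρ, _, hρ, hρ_int⟩ := tchakaloff hA (hg.prodMk hh)
  rw [Module.finrank_prod] at hρ
  rw [integral_pair hg hh, integral_pair (hρ.integrable g) (hρ.integrable h), Prod.mk.injEq]
    at hρ_int
  exact ⟨ρ, inferInstance, hρ, hρ_int⟩

lemma HasFiniteSupport.exists_kernel_integral_eq [MeasurableSingletonClass α] [Nonempty Ω]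
    {W : Type*} [NormedAddCommGroup W] [NormedSpace ℝ W] [FiniteDimensional ℝ W]
    {ν : Measure α} [IsFiniteMeasure ν] {G : Set α} (hν : HasFiniteSupport ν G N)
    {κ : Kernel α Ω} [IsMarkovKernel κ] {B : Set (α × Ω)} {g : Ω → V} {f : α × Ω → W}
    (hG : ∀ a ∈ G, (∀ᵐ ω ∂κ a, (a, ω) ∈ B) ∧ Integrable g (κ a) ∧
      Integrable (fun ω ↦ f (a, ω)) (κ a)) :
    ∃ η : Kernel α Ω, IsMarkovKernel η ∧
      HasFiniteSupport (ν ⊗ₘ η) B (N * (Module.finrank ℝ V + Module.finrank ℝ W + 1)) ∧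
      (∀ᵐ a ∂ν, ∫ ω, g ω ∂η a = ∫ ω, g ω ∂κ a) ∧
      ∫ q, f q ∂(ν ⊗ₘ η) = ∫ a, ∫ ω, f (a, ω) ∂κ a ∂ν := by
  obtain ⟨η, _, hη⟩ := hν.exists_kernel_of_forall_exists fun a ha ↦
    have ⟨hB, hg, hf⟩ := hG a ha
    tchakaloff_pair (A := {ω | (a, ω) ∈ B}) hB hg hf
  have hνη := hν.compProd (hη.mono fun _ h ↦ h.1)
  refine ⟨η, inferInstance, hνη, hη.mono fun _ h ↦ h.2.1, ?_⟩
  rw [Measure.integral_compProd (hνη.integrable f)]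
  exact integral_congr_ae (hη.mono fun _ h ↦ h.2.2)

end Tchakaloff

end FiniteSupport

section Martingale

variable {Ω Ω' E : Type*} [MeasurableSpace Ω] {m : MeasurableSpace Ω'} [mΩ' : MeasurableSpace Ω']
  [NormedAddCommGroup E]

section Natural

variable [MeasurableSpace E] [BorelSpace E]

lemma natural_comp {ι : Type*} [Preorder ι] {Y : Ω → Ω'} (hY : Measurable Y) {u : ι → Ω' → E}
    (hu : ∀ i, StronglyMeasurable (u i)) (i : ι) :
    Filtration.natural (fun i ↦ u i ∘ Y) (fun i ↦ (hu i).comp_measurable hY) i =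
      (Filtration.natural u hu i).comap Y := by
  simp [Filtration.natural, MeasurableSpace.comap_iSup, MeasurableSpace.comap_comp]

lemma natural_castSucc {T : ℕ} {u : Fin (T + 2) → Ω → E} (hu : ∀ t, StronglyMeasurable (u t))
    (t : Fin (T + 1)) :
    Filtration.natural u hu t.castSucc =
      Filtration.natural (fun t : Fin (T + 1) ↦ u t.castSucc) (fun t ↦ hu t.castSucc) t := by
  simp only [Filtration.natural]
  refine le_antisymm (iSup₂_le fun i hi ↦ ?_) (iSup₂_le fun i hi ↦
    le_iSup₂_of_le i.castSucc (Fin.castSucc_le_castSucc_iff.2 hi) le_rfl)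
  induction i using Fin.lastCases with
  | last => exact absurd hi (Fin.castSucc_lt_last t).not_ge
  | cast i => exact le_iSup₂_of_le i (Fin.castSucc_le_castSucc_iff.1 hi) le_rfl

end Natural

variable [NormedSpace ℝ E] [CompleteSpace E] {μ : Measure Ω} [IsFiniteMeasure μ]

lemma condExp_map_comp_ae_eq {Y : Ω → Ω'} (hY : Measurable Y) (hm : m ≤ mΩ') {f : Ω' → E}
    (hf : AEStronglyMeasurable f (μ.map Y)) :
    (μ.map Y)[f | m] ∘ Y =ᵐ[μ] μ[f ∘ Y | m.comap Y] := by
  by_cases hfi : Integrable f (μ.map Y)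
  · refine ae_eq_condExp_of_forall_setIntegral_eq
      ((MeasurableSpace.comap_mono hm).trans hY.comap_le) (hfi.comp_measurable hY)
      (fun _ _ _ ↦ (integrable_condExp.comp_measurable hY).integrableOn) ?_
      (stronglyMeasurable_condExp.comp_measurable (comap_measurable Y)).aestronglyMeasurable
    rintro _ ⟨B, hB, rfl⟩ -
    have setIntegral_comp {g : Ω' → E} (hg : AEStronglyMeasurable g (μ.map Y)) :
        ∫ ω in Y ⁻¹' B, (g ∘ Y) ω ∂μ = ∫ ω' in B, g ω' ∂(μ.map Y) :=
      (setIntegral_map (hm B hB) hg hY.aemeasurable).symm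
    rw [setIntegral_comp integrable_condExp.aestronglyMeasurable, setIntegral_comp hf,
      setIntegral_condExp hm hfi hB]
  · rw [condExp_of_not_integrable hfi,
      condExp_of_not_integrable ((integrable_map_measure hf hY.aemeasurable).not.1 hfi)]
    rfl

variable [MeasurableSpace E] [BorelSpace E]

lemma martingale_natural_map_iff {ι : Type*} [Preorder ι] {Y : Ω → Ω'} (hY : Measurable Y)
    {u : ι → Ω' → E} (hu : ∀ i, StronglyMeasurable (u i)) :
    Martingale u (Filtration.natural u hu) (μ.map Y) ↔
      Martingale (fun i ↦ u i ∘ Y)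
        (Filtration.natural _ fun i ↦ (hu i).comp_measurable hY) μ := by
  refine and_congr (iff_of_true (Filtration.stronglyAdapted_natural _)
    (Filtration.stronglyAdapted_natural _)) (forall₃_congr fun i j _ ↦ ?_)
  have hle := (Filtration.natural u hu).le i
  have hmeas : MeasurableSet {ω | ((μ.map Y)[u j | Filtration.natural u hu i]) ω = u i ω} :=
    (stronglyMeasurable_condExp.mono hle).measurableSet_eq_fun (hu i)
  have hcondExp := condExp_map_comp_ae_eq (μ := μ) hY hle (hu j).aestronglyMeasurable
  rw [natural_comp hY hu, Filter.EventuallyEq, ae_map_iff hY.aemeasurable hmeas]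
  exact ⟨fun h ↦ hcondExp.symm.trans h, fun h ↦ hcondExp.trans h⟩

lemma martingale_natural_fin_succ_iff {T : ℕ} {u : Fin (T + 2) → Ω → E}
    (hu : ∀ t, StronglyMeasurable (u t)) :
    Martingale u (Filtration.natural u hu) μ ↔
      Martingale (fun t : Fin (T + 1) ↦ u t.castSucc)
        (Filtration.natural _ fun t ↦ hu t.castSucc) μ ∧
      Integrable (u (Fin.last _)) μ ∧
      μ[u (Fin.last _) | Filtration.natural u hu (Fin.last T).castSucc]
        =ᵐ[μ] u (Fin.last T).castSucc := by
  constructor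
  · refine fun h ↦ ⟨⟨Filtration.stronglyAdapted_natural _, fun s t hst ↦ ?_⟩, h.integrable _,
      h.condExp_ae_eq (Fin.le_last _)⟩
    rw [← natural_castSucc hu]
    exact h.condExp_ae_eq (Fin.castSucc_le_castSucc_iff.2 hst)
  · rintro ⟨h, hint, hlast⟩
    have hpast {s t : Fin (T + 1)} (hst : s ≤ t) :
        μ[u t.castSucc | Filtration.natural u hu s.castSucc] =ᵐ[μ] u s.castSucc := by
      rw [natural_castSucc hu]
      exact h.condExp_ae_eq hst
    refine ⟨Filtration.stronglyAdapted_natural _, fun s t hst ↦ ?_⟩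
    induction t using Fin.lastCases with
    | last =>
      induction s using Fin.lastCases with
      | last =>
        rw [condExp_of_stronglyMeasurable (Filtration.le _ _)
          (Filtration.stronglyAdapted_natural hu _) hint]
      | cast s =>
        have hle := (Filtration.natural u hu).mono
          (Fin.castSucc_le_castSucc_iff.2 (Fin.le_last s))
        exact (condExp_condExp_of_le hle (Filtration.le _ _)).symm.trans
          ((condExp_congr_ae hlast).trans (hpast (Fin.le_last s)))
    | cast t =>
      induction s using Fin.lastCases with
      | last => exact absurd hst (Fin.castSucc_lt_last t).not_ge
      | cast s => exact hpast (Fin.castSucc_le_castSucc_iff.1 hst)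

end Martingale

section CompProd

variable {α E : Type*} [MeasurableSpace α] [NormedAddCommGroup E] [NormedSpace ℝ E]
  [CompleteSpace E] [SecondCountableTopology E] [MeasurableSpace E] [BorelSpace E]

lemma condExp_snd_compProd {μ : Measure α} [IsFiniteMeasure μ] {κ : Kernel α E} [IsMarkovKernel κ]
    (hκ : Integrable Prod.snd (μ ⊗ₘ κ)) :
    (μ ⊗ₘ κ)[Prod.snd | MeasurableSpace.comap Prod.fst inferInstance]
      =ᵐ[μ ⊗ₘ κ] fun q ↦ ∫ x, x ∂κ q.1 := by
  have hκ_cond : condDistrib Prod.snd Prod.fst (μ ⊗ₘ κ) =ᵐ[(μ ⊗ₘ κ).map Prod.fst] κ :=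
    condDistrib_ae_eq_of_measure_eq_compProd _ measurable_snd.aemeasurable <| by
      rw [show (μ ⊗ₘ κ).map Prod.fst = μ from Measure.fst_compProd μ κ]
      exact Measure.map_id
  filter_upwards [condExp_ae_eq_integral_condDistrib' measurable_fst hκ,
    ae_of_ae_map measurable_fst.aemeasurable hκ_cond] with q hq hq_cond
  rw [hq, hq_cond]

end CompProd

section Paths

variable {E : Type*} [MeasurableSpace E]

/-- The identification of a path up to time `T + 1` with the path up to time `T` together with the
terminal position. -/
def pathSnoc (E : Type*) [MeasurableSpace E] (T : ℕ) :
    ((Fin (T + 1) → E) × E) ≃ᵐ (Fin (T + 2) → E) :=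
  MeasurableEquiv.prodComm.trans
    (MeasurableEquiv.piFinSuccAbove (fun _ ↦ E) (Fin.last (T + 1))).symm

@[simp] lemma pathSnoc_castSucc {T : ℕ} (q : (Fin (T + 1) → E) × E) (t : Fin (T + 1)) :
    pathSnoc E T q t.castSucc = q.1 t := by
  simp [pathSnoc, MeasurableEquiv.prodComm, MeasurableEquiv.piFinSuccAbove, Fin.insertNthEquiv,
    Fin.insertNth_last']

@[simp] lemma pathSnoc_last {T : ℕ} (q : (Fin (T + 1) → E) × E) :
    pathSnoc E T q (Fin.last _) = q.2 := by
  simp [pathSnoc, MeasurableEquiv.prodComm, MeasurableEquiv.piFinSuccAbove, Fin.insertNthEquiv,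
    Fin.insertNth_last']

lemma exists_eq_map_pathSnoc_compProd [StandardBorelSpace E] [Nonempty E] {T : ℕ}
    (μ : Measure (Fin (T + 2) → E)) [IsProbabilityMeasure μ] :
    ∃ (μ' : Measure (Fin (T + 1) → E)) (κ : Kernel (Fin (T + 1) → E) E),
      IsProbabilityMeasure μ' ∧ IsMarkovKernel κ ∧ μ = (μ' ⊗ₘ κ).map (pathSnoc E T) := by
  let P := μ.map (pathSnoc E T).symm
  have : IsProbabilityMeasure P :=
    Measure.isProbabilityMeasure_map (pathSnoc E T).symm.measurable.aemeasurable
  refine ⟨P.fst, P.condKernel, inferInstance, inferInstance, ?_⟩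
  rw [P.disintegrate, (pathSnoc E T).map_map_symm]

variable [NormedAddCommGroup E] [BorelSpace E] [SecondCountableTopology E] {T : ℕ}

lemma stronglyMeasurable_eval (t : Fin (T + 1)) :
    StronglyMeasurable fun π : Fin (T + 1) → E ↦ π t :=
  (measurable_pi_apply t).stronglyMeasurable

lemma natural_eval_last :
    Filtration.natural (fun t (π : Fin (T + 1) → E) ↦ π t) stronglyMeasurable_eval (Fin.last T) =
      MeasurableSpace.pi :=
  le_antisymm (Filtration.le _ _) (iSup_le fun t ↦ le_iSup₂_of_le t (Fin.le_last t) le_rfl)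

variable [NormedSpace ℝ E]

/-- The coordinate process on `E ^ (T + 1)` is a martingale under `μ` in its natural filtration;
the starting point is not prescribed. -/
def IsMartingaleLaw (μ : Measure (Fin (T + 1) → E)) : Prop :=
  Martingale (fun t (π : Fin (T + 1) → E) ↦ π t)
    (Filtration.natural (fun t (π : Fin (T + 1) → E) ↦ π t) stronglyMeasurable_eval) μ

variable [CompleteSpace E]

theorem isMartingaleLaw_map_pathSnoc_compProd_iff {μ : Measure (Fin (T + 1) → E)}
    [IsFiniteMeasure μ] {κ : Kernel (Fin (T + 1) → E) E} [IsMarkovKernel κ] :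
    IsMartingaleLaw ((μ ⊗ₘ κ).map (pathSnoc E T)) ↔
      IsMartingaleLaw μ ∧ Integrable Prod.snd (μ ⊗ₘ κ) ∧
        ∀ᵐ p ∂μ, ∫ x, x ∂κ p = p (Fin.last T) := by
  have hfst : (μ ⊗ₘ κ).map Prod.fst = μ := Measure.fst_compProd μ κ
  have hpast := martingale_natural_map_iff (μ := μ ⊗ₘ κ) measurable_fst
    (stronglyMeasurable_eval (E := E) (T := T))
  have hcomap : Filtration.natural (fun t (q : (Fin (T + 1) → E) × E) ↦ q.1 t)
      (fun t ↦ (stronglyMeasurable_eval t).comp_measurable measurable_fst) (Fin.last T) =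
        MeasurableSpace.comap Prod.fst inferInstance :=
    (natural_comp measurable_fst stronglyMeasurable_eval _).trans (by rw [natural_eval_last])
  have hmeas : MeasurableSet {p : Fin (T + 1) → E | ∫ x, x ∂κ p = p (Fin.last T)} :=
    (stronglyMeasurable_id.integral_kernel).measurableSet_eq_fun (stronglyMeasurable_eval _)
  rw [hfst] at hpast
  rw [IsMartingaleLaw, martingale_natural_map_iff (pathSnoc E T).measurable,
    martingale_natural_fin_succ_iff, natural_castSucc]
  simp only [Function.comp_def, pathSnoc_castSucc, pathSnoc_last] at hpast ⊢
  refine and_congr hpast.symm (and_congr_right fun hint ↦ ?_)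
  rw [hcomap]
  have hcondExp := condExp_snd_compProd hint
  rw [← hfst, ae_map_iff measurable_fst.aemeasurable hmeas, hfst]
  exact ⟨fun h ↦ hcondExp.symm.trans h, fun h ↦ hcondExp.trans h⟩

end Paths

section MartingaleTchakaloff

variable {E F : Type*} [NormedAddCommGroup E] [NormedSpace ℝ E] [FiniteDimensional ℝ E]
  [MeasurableSpace E] [BorelSpace E]
  [NormedAddCommGroup F] [NormedSpace ℝ F] [FiniteDimensional ℝ F] {T : ℕ}

theorem exists_isMartingaleLaw_hasFiniteSupport {x₀ : E} {μ : Measure (Fin (T + 1) → E)}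
    [IsProbabilityMeasure μ] (hμ : IsMartingaleLaw μ) (h0 : ∀ᵐ π ∂μ, π 0 = x₀)
    {A : Set (Fin (T + 1) → E)} (hA : ∀ᵐ π ∂μ, π ∈ A) {f : (Fin (T + 1) → E) → F}
    (hf : Integrable f μ) :
    ∃ ν : Measure (Fin (T + 1) → E), IsProbabilityMeasure ν ∧ IsMartingaleLaw ν ∧
      HasFiniteSupport ν A ((Module.finrank ℝ E + Module.finrank ℝ F + 1) ^ T) ∧
      ∫ π, f π ∂ν = ∫ π, f π ∂μ := by
  induction T with
  | zero =>
    have hconst : ∀ᵐ π ∂μ, π = fun _ ↦ x₀ :=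
      h0.mono fun π hπ ↦ funext (Fin.forall_fin_one.2 hπ)
    obtain ⟨_, hx₀A, rfl⟩ := (hA.and hconst).exists
    exact ⟨μ, inferInstance, hμ,
      ⟨{fun _ ↦ x₀}, by simpa using hx₀A, by simp, by simpa using hconst⟩, rfl⟩
  | succ T ih =>
    obtain ⟨μ', κ, _, _, rfl⟩ := exists_eq_map_pathSnoc_compProd μ
    obtain ⟨hμ', hsnd, hmean⟩ := isMartingaleLaw_map_pathSnoc_compProd_iff.1 hμ
    have hsnoc := (pathSnoc E T).measurable
    have h0' : ∀ᵐ p ∂μ', p 0 = x₀ := by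
      filter_upwards [Measure.ae_ae_of_ae_compProd (ae_of_ae_map hsnoc.aemeasurable h0)] with p hp
      obtain ⟨x, hx⟩ := hp.exists
      exact (pathSnoc_castSucc (p, x) 0).symm.trans hx
    have hA' : ∀ᵐ p ∂μ', ∀ᵐ x ∂κ p, pathSnoc E T (p, x) ∈ A :=
      Measure.ae_ae_of_ae_compProd (ae_of_ae_map hsnoc.aemeasurable hA)
    have hsnd' : ∀ᵐ p ∂μ', Integrable (fun x ↦ x) (κ p) :=
      ((Measure.integrable_compProd_iff hsnd.aestronglyMeasurable).1 hsnd).1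
    have hf_snoc : Integrable (fun q ↦ f (pathSnoc E T q)) (μ' ⊗ₘ κ) := hf.comp_measurable hsnoc
    have hf' := ((Measure.integrable_compProd_iff hf_snoc.aestronglyMeasurable).1 hf_snoc).1
    obtain ⟨ν', _, hν', hν'_supp, hν'_int⟩ := ih hμ' h0' (hmean.and (hA'.and (hsnd'.and hf')))
      (f := fun p ↦ ∫ x, f (pathSnoc E T (p, x)) ∂κ p) (Integrable.integral_compProd hf_snoc)
    obtain ⟨η, _, hη_supp, hη_mean, hη_int⟩ := hν'_supp.exists_kernel_integral_eq
      (B := pathSnoc E T ⁻¹' A) (f := fun q ↦ f (pathSnoc E T q)) fun p hp ↦ hp.2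
    refine ⟨(ν' ⊗ₘ η).map (pathSnoc E T), Measure.isProbabilityMeasure_map hsnoc.aemeasurable,
      isMartingaleLaw_map_pathSnoc_compProd_iff.2 ⟨hν', hη_supp.integrable _, ?_⟩,
      by simpa only [pow_succ] using hη_supp.map hsnoc, ?_⟩
    · filter_upwards [hη_mean, hν'_supp.ae_mem] with p hp hpG using hp.trans hpG.1
    · rw [integral_map_equiv, hη_int, hν'_int, integral_map_equiv,
        Measure.integral_compProd hf_snoc]

theorem martingale_tchakaloff_general {x₀ : E} {μ : Measure (Fin (T + 1) → E)}
    [IsProbabilityMeasure μ] (hμ : IsMartingaleLaw μ) (h0 : ∀ᵐ π ∂μ, π 0 = x₀)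
    {A : Set (Fin (T + 1) → E)} (hA : ∀ᵐ π ∂μ, π ∈ A) {f : (Fin (T + 1) → E) → F}
    (hf : Integrable f μ) :
    ∃ ν : Measure (Fin (T + 1) → E), IsProbabilityMeasure ν ∧ IsMartingaleLaw ν ∧
      (∀ᵐ π ∂ν, π 0 = x₀) ∧
      HasFiniteSupport ν A ((Module.finrank ℝ E + Module.finrank ℝ F + 1) ^ T) ∧
      ∫ π, f π ∂ν = ∫ π, f π ∂μ := by
  obtain ⟨ν, hν_prob, hν, hν_supp, hν_int⟩ :=
    exists_isMartingaleLaw_hasFiniteSupport hμ h0 (hA.and h0) hf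
  exact ⟨ν, hν_prob, hν, hν_supp.ae_mem.mono fun _ h ↦ h.2, hν_supp.mono fun _ h ↦ h.1, hν_int⟩

end MartingaleTchakaloff

/-- Tchakaloff's theorem for martingales: if `μ` is a martingale law
on `(ℝⁿ)^{T+1}` starting at `x₀`, `A` is a Borel set of full `μ`-measure, and
`f : (ℝⁿ)^{T+1} → ℝᵏ` is Borel measurable and `μ`-integrable, then there is a martingale
law `ν` starting at `x₀`, supported on a finite subset `S ⊆ A` with
`card S ≤ (n+k+1)^T`, such that `∫ f dν = ∫ f dμ`. -/
theorem martingale_tchakaloff (k n T : ℕ) (x₀ : Fin n → ℝ)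
    (μ : Measure (Fin (T + 1) → Fin n → ℝ)) [IsProbabilityMeasure μ]
    (hmart : Martingale (fun t (π : Fin (T + 1) → Fin n → ℝ) => π t)
      (Filtration.natural (fun t (π : Fin (T + 1) → Fin n → ℝ) => π t)
        fun t => (measurable_pi_apply t).stronglyMeasurable) μ)
    (h0 : ∀ᵐ π ∂μ, π 0 = x₀)
    (A : Set (Fin (T + 1) → Fin n → ℝ)) (hAm : MeasurableSet A) (hA1 : μ A = 1)
    (f : (Fin (T + 1) → Fin n → ℝ) → Fin k → ℝ) (hfm : Measurable f)
    (hfi : Integrable f μ) :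
    ∃ ν : Measure (Fin (T + 1) → Fin n → ℝ), IsProbabilityMeasure ν ∧
      Martingale (fun t (π : Fin (T + 1) → Fin n → ℝ) => π t)
        (Filtration.natural (fun t (π : Fin (T + 1) → Fin n → ℝ) => π t)
          fun t => (measurable_pi_apply t).stronglyMeasurable) ν ∧
      (∀ᵐ π ∂ν, π 0 = x₀) ∧
      (∃ S : Finset (Fin (T + 1) → Fin n → ℝ),
        ↑S ⊆ A ∧ S.card ≤ (n + k + 1) ^ T ∧ ν ((↑S : Set (Fin (T + 1) → Fin n → ℝ))ᶜ) = 0) ∧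
      ∫ π, f π ∂ν = ∫ π, f π ∂μ := by
  simpa only [Module.finrank_fin_fun] using!
    martingale_tchakaloff_general hmart h0 ((prob_compl_eq_zero_iff hAm).2 hA1) hfi
end
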